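/- arXiv:2506.19064 — 2 statements merged into one kernel-verified Lean document; each statement's English description precedes it below -/
import Mathlib

section
/- Let μ and ν be compactly supported probability measures on ℝ, and let ρ be a free additive convolution of μ and ν. Then for every real z < z*_ρ the number g := G_ρ(z) satisfies: 0 < g < g*_ρ, −g ∈ D̂_μ, z − R̂_μ(−g) < a_ν, and G_ν(z − R̂_μ(−g)) = g; that is, g = G_ρ(z) solves the fixed point equation ∫ (λ − z + R̂_μ(−g))⁻¹ dν(λ) = g. -/
/-!
The argument is a real-variable version of free subordination. Write `F = -1 / G` and put
`ω₁ = G_μ^⟨-1⟩ ∘ G_ρ`, `ω₂ = G_ν^⟨-1⟩ ∘ G_ρ`, functions defined at those `z < a_ρ` for which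
`G_ρ(z)` is a value of both `G_μ` on `(-∞, a_μ)` and `G_ν` on `(-∞, a_ν)`. This domain (`subDom`)
is an initial segment of `(-∞, a_ρ)`. The identity of `R`-transforms near `0` says
`ω₁ + ω₂ = z + F_ρ` near `-∞`, hence on all of the domain by analyticity (`subFun_add`). It follows
that `z - R̂_μ(-g) = ω₂(z)` for `g = G_ρ(z)`, so that all the claims reduce to the domain being
the whole of `(-∞, a_ρ)` (`mem_subDom`).

For this one shows that `ω₁` stays away from the edge: `a_μ - ω₁(z) ≥ a_ρ - z` (`subFun_add_le`).

* The Taylor coefficients of `G_μ` at a point left of the support are the moments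
  `∫ (λ - z)^{-(n+1)} dμ(λ)`, a log-convex sequence. By Kaluza's theorem on reciprocals of such
  power series, `F_μ' - 1` has nonnegative derivatives of all orders
  (`absMono_deriv_recipG_sub_one`).
* Differentiating `ω₁ = z + F_ν(ω₂) - ω₂` gives `ω₁' = 1 + (F_ν'(ω₂) - 1) ω₂'`, and symmetrically
  for `ω₂'`. As `ω₁'` and `ω₂'` are positive, this linear system bootstraps to nonnegativity of all
  derivatives of `ω₁' - 1` (`absMono_subordination`).
* Hence the Taylor coefficients of `G_μ` at `ω₁(z)` are at most those of `G_ρ = G_μ ∘ ω₁` at `z`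
  (`AbsMono.iteratedDeriv_le_comp`), which are at most `(a_ρ - z)^{-(n+1)}`. The growth of the
  moments of `μ` at `ω₁(z)` is `(a_μ - ω₁(z))^{-n}` up to subexponential factors, which gives the
  claim (`le_aInf_of_stMom_le`).
-/

open MeasureTheory Filter Set

noncomputable section

/-- The topological support of a Borel measure on `ℝ`. -/
def msupp (μ : Measure ℝ) : Set ℝ := {x : ℝ | ∀ U ∈ nhds x, μ U ≠ 0}

/-- Compact support: some compact set has full measure. -/
def HasCompactSupp (μ : Measure ℝ) : Prop := ∃ K : Set ℝ, IsCompact K ∧ μ K = 1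

/-- `a_μ`, the infimum of the support. -/
def aInf (μ : Measure ℝ) : ℝ := sInf (msupp μ)

/-- `b_μ`, the supremum of the support. -/
def bSup (μ : Measure ℝ) : ℝ := sSup (msupp μ)

/-- The (real) Stieltjes transform `G_μ(z) = ∫ (λ - z)⁻¹ dμ(λ)`. -/
def Gst (μ : Measure ℝ) (z : ℝ) : ℝ := ∫ l, (l - z)⁻¹ ∂μ

/-- `G_μ(a_μ) = lim_{z ↑ a_μ} G_μ(z) ∈ (0,∞]`, as the supremum (in `EReal`) of the values of
`G_μ` on `(-∞, a_μ)` (the two agree since `G_μ` is increasing there). -/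
def GaSup (μ : Measure ℝ) : EReal :=
  sSup ((fun z => ((Gst μ z : ℝ) : EReal)) '' Set.Iio (aInf μ))

/-- `G_μ(b_μ) = lim_{z ↓ b_μ} G_μ(z) ∈ [-∞,0)`, as the infimum (in `EReal`) of the values of
`G_μ` on `(b_μ, ∞)` (the two agree since `G_μ` is increasing there). -/
def GbInf (μ : Measure ℝ) : EReal :=
  sInf ((fun z => ((Gst μ z : ℝ) : EReal)) '' Set.Ioi (bSup μ))

/-- The interval `D̂_μ = (-G_μ(a_μ), -G_μ(b_μ)) ⊆ ℝ`. -/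
def Dhat (μ : Measure ℝ) : Set ℝ :=
  {u : ℝ | -(GaSup μ) < (u : EReal) ∧ (u : EReal) < -(GbInf μ)}

/-- The inverse `G_μ^⟨-1⟩` of the restriction of `G_μ` to `ℝ ∖ [a_μ, b_μ]`. -/
def Ginv (μ : Measure ℝ) (g : ℝ) : ℝ :=
  Function.invFunOn (Gst μ) (Set.Iio (aInf μ) ∪ Set.Ioi (bSup μ)) g

/-- The real `R`-transform `R̂_μ(u) = G_μ^⟨-1⟩(-u) - u⁻¹`, meaningful for `u ∈ D̂_μ ∖ {0}`. -/
def Rhat (μ : Measure ℝ) (u : ℝ) : ℝ := Ginv μ (-u) - u⁻¹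

/-- `ρ` is a free additive convolution of `μ` and `ν`. -/
def IsFreeAdd (μ ν ρ : Measure ℝ) : Prop :=
  IsProbabilityMeasure ρ ∧ HasCompactSupp ρ ∧
  ∃ ε > (0 : ℝ), ∀ u : ℝ, u ∈ Set.Ioo (-ε) ε → u ≠ 0 →
    u ∈ Dhat ρ ∧ u ∈ Dhat μ ∧ u ∈ Dhat ν ∧ Rhat ρ u = Rhat μ u + Rhat ν u

/-- `μ` is nondegenerate: not a point mass. -/
def Nondeg (μ : Measure ℝ) : Prop := ¬ ∃ c : ℝ, μ = Measure.dirac c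

/-- The logarithmic potential `U_ρ(z) = ∫ log |z - λ| dρ(λ)`. -/
def Upot (ρ : Measure ℝ) (z : ℝ) : ℝ := ∫ l, Real.log |z - l| ∂ρ

/-- `E_{μ,ν,z}(g) = ∫₀^g s R̂_μ'(-s) ds + ∫ log (λ - z + R̂_μ(-g)) dν(λ)`. -/
def Efun (μ ν : Measure ℝ) (z : ℝ) (g : ℝ) : ℝ :=
  (∫ s in (0:ℝ)..g, s * deriv (Rhat μ) (-s)) + ∫ l, Real.log (l - z + Rhat μ (-g)) ∂ν

/-- The domain `Ê_{μ,ν,z}` of `E_{μ,ν,z}`. -/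
def Ehat (μ ν : Measure ℝ) (z : ℝ) : Set ℝ :=
  {g : ℝ | -g ∈ Dhat μ ∧ g ≠ 0 ∧ z - Rhat μ (-g) < aInf ν}

/-- `F̂_{μ,ν}(h) = R̂_μ(-G_ν(h)) + h`. -/
def Fhat (μ ν : Measure ℝ) (h : ℝ) : ℝ := Rhat μ (-(Gst ν h)) + h

/-- The domain of `F̂_{μ,ν}`. -/
def FhatDom (μ ν : Measure ℝ) : Set ℝ := {h : ℝ | h < aInf ν ∧ -(Gst ν h) ∈ Dhat μ}

/-- `Ĥ_{μ,ν}`: points of the domain to the left of which `F̂_{μ,ν}'` is positive. -/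
def Hhat (μ ν : Measure ℝ) : Set ℝ :=
  {h : ℝ | h ∈ FhatDom μ ν ∧ ∀ t ∈ FhatDom μ ν, t < h → 0 < deriv (Fhat μ ν) t}

/-- `h*_{μ,ν} = sup Ĥ_{μ,ν}`. -/
def hstar (μ ν : Measure ℝ) : ℝ := sSup (Hhat μ ν)

end

/-! ### Supports and moments of the Stieltjes kernel -/

theorem msupp_eq_support (μ : Measure ℝ) : msupp μ = μ.support := by
  ext x
  rw [Measure.mem_support_iff_forall]
  simp [msupp, pos_iff_ne_zero]

theorem msupp_nonempty (μ : Measure ℝ) [IsProbabilityMeasure μ] : (msupp μ).Nonempty := by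
  rw [msupp_eq_support]
  exact Measure.nonempty_support (IsProbabilityMeasure.ne_zero μ)

theorem msupp_subset {μ : Measure ℝ} [IsProbabilityMeasure μ] (hc : HasCompactSupp μ) :
    ∃ K, IsCompact K ∧ msupp μ ⊆ K := by
  obtain ⟨K, hK, h1⟩ := hc
  refine ⟨K, hK, ?_⟩
  rw [msupp_eq_support]
  exact Measure.support_subset_of_isClosed hK.isClosed
    ((prob_compl_eq_zero_iff hK.isClosed.measurableSet).2 h1)

theorem ae_mem_msupp (μ : Measure ℝ) : ∀ᵐ l ∂μ, l ∈ msupp μ := by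
  rw [msupp_eq_support]
  exact Measure.support_mem_ae

theorem ae_aInf_le {μ : Measure ℝ} [IsProbabilityMeasure μ] (hc : HasCompactSupp μ) :
    ∀ᵐ l ∂μ, aInf μ ≤ l := by
  obtain ⟨K, hK, hs⟩ := msupp_subset hc
  filter_upwards [ae_mem_msupp μ] with l hl
  exact csInf_le (hK.bddBelow.mono hs) hl

theorem ae_le_bSup {μ : Measure ℝ} [IsProbabilityMeasure μ] (hc : HasCompactSupp μ) :
    ∀ᵐ l ∂μ, l ≤ bSup μ := by
  obtain ⟨K, hK, hs⟩ := msupp_subset hc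
  filter_upwards [ae_mem_msupp μ] with l hl
  exact le_csSup (hK.bddAbove.mono hs) hl

theorem measure_Iio_pos {μ : Measure ℝ} [IsProbabilityMeasure μ]
    {x : ℝ} (hx : aInf μ < x) : 0 < μ (Iio x) := by
  obtain ⟨y, hy, hyx⟩ := exists_lt_of_csInf_lt (msupp_nonempty μ) hx
  exact pos_iff_ne_zero.2 (hy _ (Iio_mem_nhds hyx))

theorem measure_pos_of_ae_mem {μ : Measure ℝ} [IsProbabilityMeasure μ] {s : Set ℝ}
    (h : ∀ᵐ l ∂μ, l ∈ s) : 0 < μ s := by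
  refine pos_iff_ne_zero.2 fun h0 => ?_
  have : ∀ᵐ l ∂μ, False := by
    filter_upwards [h, measure_eq_zero_iff_ae_notMem.1 h0] with l a b using b a
  simp [IsProbabilityMeasure.ne_zero] at this

/-- The normalised moments `M_n(z) = ∫ (λ - z)^{-(n+1)} dμ(λ)`, which are the Taylor coefficients
of `G_μ` at a point `z < a_μ`; in particular `M_0 = G_μ`. -/
noncomputable def stMom (μ : Measure ℝ) (n : ℕ) (z : ℝ) : ℝ := ∫ l, ((l - z)⁻¹) ^ (n + 1) ∂μ

section Moments

variable {μ : Measure ℝ} [IsProbabilityMeasure μ] {z : ℝ}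

theorem stMom_zero (μ : Measure ℝ) (z : ℝ) : stMom μ 0 z = Gst μ z := by
  simp [stMom, Gst]

theorem ae_kernel_bound (hc : HasCompactSupp μ) (hz : z < aInf μ) :
    ∀ᵐ l ∂μ, 0 < (l - z)⁻¹ ∧ (l - z)⁻¹ ≤ (aInf μ - z)⁻¹ := by
  filter_upwards [ae_aInf_le hc] with l hl
  exact ⟨inv_pos.2 (by linarith), inv_anti₀ (by linarith) (by linarith)⟩

theorem integrable_kernel (hc : HasCompactSupp μ) (hz : z < aInf μ) (n : ℕ) :
    Integrable (fun l => ((l - z)⁻¹) ^ n) μ := by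
  refine Integrable.of_bound (C := ((aInf μ - z)⁻¹) ^ n) (by fun_prop) ?_
  filter_upwards [ae_kernel_bound hc hz] with l hl
  rw [Real.norm_of_nonneg (pow_nonneg hl.1.le _)]
  exact pow_le_pow_left₀ hl.1.le hl.2 _

theorem stMom_pos (hc : HasCompactSupp μ) (hz : z < aInf μ) (n : ℕ) : 0 < stMom μ n z := by
  refine (integral_pos_iff_support_of_nonneg_ae ?_ (integrable_kernel hc hz _)).2 ?_
  · filter_upwards [ae_kernel_bound hc hz] with l hl using pow_nonneg hl.1.le _
  · have : ∀ᵐ l ∂μ, l ∈ Function.support (fun l => ((l - z)⁻¹) ^ (n + 1)) := by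
      filter_upwards [ae_kernel_bound hc hz] with l hl using (pow_pos hl.1 _).ne'
    exact measure_pos_of_ae_mem this

theorem stMom_le (hc : HasCompactSupp μ) (hz : z < aInf μ) (n : ℕ) :
    stMom μ n z ≤ ((aInf μ - z)⁻¹) ^ (n + 1) := by
  calc stMom μ n z ≤ ∫ _, ((aInf μ - z)⁻¹) ^ (n + 1) ∂μ := by
        refine integral_mono_ae (integrable_kernel hc hz _) (integrable_const _) ?_
        filter_upwards [ae_kernel_bound hc hz] with l hl
        exact pow_le_pow_left₀ hl.1.le hl.2 _
    _ = _ := by simp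

theorem integral_kernel_quad (hc : HasCompactSupp μ) (hz : z < aInf μ) (n : ℕ) (s : ℝ) :
    0 ≤ stMom μ (n + 2) z - 2 * s * stMom μ (n + 1) z + s ^ 2 * stMom μ n z := by
  have h : ∫ l, ((l - z)⁻¹) ^ (n + 1) * ((l - z)⁻¹ - s) ^ 2 ∂μ =
      stMom μ (n + 2) z - 2 * s * stMom μ (n + 1) z + s ^ 2 * stMom μ n z := by
    simp only [stMom]
    rw [← integral_const_mul, ← integral_const_mul, ← integral_sub, ← integral_add]
    · congr 1; ext l; ring
    · exact (integrable_kernel hc hz _).sub ((integrable_kernel hc hz _).const_mul _)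
    · exact (integrable_kernel hc hz _).const_mul _
    · exact integrable_kernel hc hz _
    · exact (integrable_kernel hc hz _).const_mul _
  rw [← h]
  refine integral_nonneg_of_ae ?_
  filter_upwards [ae_kernel_bound hc hz] with l hl
  exact mul_nonneg (pow_nonneg hl.1.le _) (sq_nonneg _)

/-- Log-convexity of the moment sequence (Cauchy–Schwarz). -/
theorem stMom_logConvex (hc : HasCompactSupp μ) (hz : z < aInf μ) (n : ℕ) :
    stMom μ (n + 1) z ^ 2 ≤ stMom μ n z * stMom μ (n + 2) z := by
  have h0 := stMom_pos hc hz n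
  have h := integral_kernel_quad hc hz n (stMom μ (n + 1) z / stMom μ n z)
  have e : stMom μ (n + 2) z - 2 * (stMom μ (n + 1) z / stMom μ n z) * stMom μ (n + 1) z +
      (stMom μ (n + 1) z / stMom μ n z) ^ 2 * stMom μ n z =
      (stMom μ n z * stMom μ (n + 2) z - stMom μ (n + 1) z ^ 2) / stMom μ n z := by
    field_simp; ring
  rw [e] at h
  have := (le_div_iff₀ h0).1 h
  linarith

/-- `G_μ² ≤ G_μ'` (Cauchy–Schwarz). -/
theorem stMom_sq_le (hc : HasCompactSupp μ) (hz : z < aInf μ) :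
    stMom μ 0 z ^ 2 ≤ stMom μ 1 z := by
  have h : ∫ l, ((l - z)⁻¹ - stMom μ 0 z) ^ 2 ∂μ = stMom μ 1 z - stMom μ 0 z ^ 2 := by
    have e : ∀ l, ((l - z)⁻¹ - stMom μ 0 z) ^ 2 =
        (((l - z)⁻¹) ^ (1 + 1) - 2 * stMom μ 0 z * ((l - z)⁻¹) ^ (0 + 1)) +
          stMom μ 0 z ^ 2 := by
      intro l; ring
    simp only [e]
    rw [integral_add, integral_sub, integral_const_mul]
    · change stMom μ 1 z - 2 * stMom μ 0 z * stMom μ 0 z + _ = _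
      simp; ring
    · exact integrable_kernel hc hz _
    · exact (integrable_kernel hc hz _).const_mul _
    · exact (integrable_kernel hc hz _).sub ((integrable_kernel hc hz _).const_mul _)
    · exact integrable_const _
  have : 0 ≤ ∫ l, ((l - z)⁻¹ - stMom μ 0 z) ^ 2 ∂μ := integral_nonneg fun l => sq_nonneg _
  linarith

/-- Integration of the geometric series `(λ - z - y)⁻¹ = ∑ yⁿ (λ - z)^{-(n+1)}`. -/
theorem hasFPowerSeriesOnBall_Gst (hc : HasCompactSupp μ) (hz : z < aInf μ) :
    HasFPowerSeriesOnBall (Gst μ) (FormalMultilinearSeries.ofScalars ℝ fun n => stMom μ n z) z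
      (ENNReal.ofReal (aInf μ - z)) := by
  have hd : 0 < aInf μ - z := sub_pos.2 hz
  refine ⟨?_, by simpa using hz, ?_⟩
  · refine FormalMultilinearSeries.le_radius_of_bound _ ((aInf μ - z)⁻¹) fun n => ?_
    rw [FormalMultilinearSeries.ofScalars_norm, Real.norm_of_nonneg (stMom_pos hc hz n).le,
      Real.coe_toNNReal _ hd.le]
    calc _ ≤ ((aInf μ - z)⁻¹) ^ (n + 1) * (aInf μ - z) ^ n := by
          gcongr; exact stMom_le hc hz n
      _ = _ := by rw [pow_succ, mul_right_comm, ← mul_pow, inv_mul_cancel₀ hd.ne', one_pow, one_mul]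
  · intro y hy
    rw [Metric.mem_eball, edist_zero_right, ← ofReal_norm,
      ENNReal.ofReal_lt_ofReal_iff hd, Real.norm_eq_abs] at hy
    have hq : |y| * (aInf μ - z)⁻¹ < 1 := by
      rw [← div_eq_mul_inv, div_lt_one hd]; exact hy
    have key := hasSum_integral_of_summable_integral_norm (μ := μ)
      (F := fun n l => y ^ n * ((l - z)⁻¹) ^ (n + 1))
      (fun n => (integrable_kernel hc hz _).const_mul _) ?_
    · have e1 : ∀ n, ∫ l, y ^ n * ((l - z)⁻¹) ^ (n + 1) ∂μ =
          (FormalMultilinearSeries.ofScalars ℝ fun n => stMom μ n z) n fun _ => y := by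
        intro n
        rw [integral_const_mul, FormalMultilinearSeries.ofScalars_apply_eq]
        simp [stMom, mul_comm]
      have e2 : ∫ l, (∑' n, y ^ n * ((l - z)⁻¹) ^ (n + 1)) ∂μ = Gst μ (z + y) := by
        refine integral_congr_ae ?_
        filter_upwards [ae_aInf_le hc, ae_kernel_bound hc hz] with l hl hl'
        have h1 : |y * (l - z)⁻¹| < 1 := by
          rw [abs_mul, abs_of_pos hl'.1]
          exact (mul_le_mul_of_nonneg_left hl'.2 (abs_nonneg _)).trans_lt hq
        have h2 : ∀ n, y ^ n * ((l - z)⁻¹) ^ (n + 1) = (l - z)⁻¹ * (y * (l - z)⁻¹) ^ n := by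
          intro n; rw [mul_pow]; ring
        simp only [h2]
        rw [tsum_mul_left, tsum_geometric_of_abs_lt_one h1]
        have h3 : l - z ≠ 0 := by have := hl'.1; intro h; simp [h] at this
        have h4 : l - z - y ≠ 0 := by have := (abs_lt.1 hy).2; intro h; linarith
        rw [← mul_inv]
        congr 1
        field_simp
        ring
      simp only [e1] at key
      rwa [e2] at key
    · refine Summable.of_nonneg_of_le (fun n => integral_nonneg fun l => norm_nonneg _)
        (fun n => ?_) ((summable_geometric_of_lt_one (by positivity) hq).mul_left
          ((aInf μ - z)⁻¹))
      have : ∫ l, ‖y ^ n * ((l - z)⁻¹) ^ (n + 1)‖ ∂μ = |y| ^ n * stMom μ n z := by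
        rw [stMom, ← integral_const_mul]
        refine integral_congr_ae ?_
        filter_upwards [ae_kernel_bound hc hz] with l hl
        rw [norm_mul, Real.norm_of_nonneg (pow_nonneg hl.1.le (n + 1)), norm_pow, Real.norm_eq_abs]
      rw [this]
      calc _ ≤ |y| ^ n * ((aInf μ - z)⁻¹) ^ (n + 1) := by gcongr; exact stMom_le hc hz n
        _ = _ := by rw [mul_pow]; ring

theorem analyticAt_Gst (hc : HasCompactSupp μ) (hz : z < aInf μ) : AnalyticAt ℝ (Gst μ) z :=
  (hasFPowerSeriesOnBall_Gst hc hz).analyticAt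

theorem iteratedDeriv_Gst (hc : HasCompactSupp μ) (hz : z < aInf μ) (n : ℕ) :
    iteratedDeriv n (Gst μ) z = n.factorial * stMom μ n z := by
  have h := (hasFPowerSeriesOnBall_Gst hc hz).factorial_smul 1 n
  rw [iteratedDeriv_eq_iteratedFDeriv]
  rw [FormalMultilinearSeries.ofScalars_apply_eq] at h
  simpa using h.symm

theorem hasDerivAt_Gst (hc : HasCompactSupp μ) (hz : z < aInf μ) :
    HasDerivAt (Gst μ) (stMom μ 1 z) z := by
  have h := iteratedDeriv_Gst hc hz 1
  rw [iteratedDeriv_one] at h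
  have := (analyticAt_Gst hc hz).differentiableAt.hasDerivAt
  rw [h] at this
  simpa using this

theorem Gst_pos (hc : HasCompactSupp μ) (hz : z < aInf μ) : 0 < Gst μ z := by
  rw [← stMom_zero]; exact stMom_pos hc hz 0

theorem Gst_le (hc : HasCompactSupp μ) (hz : z < aInf μ) : Gst μ z ≤ (aInf μ - z)⁻¹ := by
  rw [← stMom_zero]; simpa using stMom_le hc hz 0

theorem strictMonoOn_Gst (hc : HasCompactSupp μ) : StrictMonoOn (Gst μ) (Iio (aInf μ)) := by
  refine strictMonoOn_of_deriv_pos (convex_Iio _)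
    (fun x hx => (analyticAt_Gst hc hx).continuousAt.continuousWithinAt) fun x hx => ?_
  rw [interior_Iio] at hx
  rw [(hasDerivAt_Gst hc hx).deriv]
  exact stMom_pos hc hx 1

theorem Gst_neg_of_gt (hc : HasCompactSupp μ) (hz : bSup μ < z) : Gst μ z < 0 := by
  have hb : ∀ᵐ l ∂μ, 0 < (z - l)⁻¹ ∧ (z - l)⁻¹ ≤ (z - bSup μ)⁻¹ := by
    filter_upwards [ae_le_bSup hc] with l hl
    exact ⟨inv_pos.2 (by linarith), inv_anti₀ (by linarith) (by linarith)⟩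
  have hi : Integrable (fun l => (z - l)⁻¹) μ := by
    refine Integrable.of_bound (C := (z - bSup μ)⁻¹) (by fun_prop) ?_
    filter_upwards [hb] with l hl
    rw [Real.norm_of_nonneg hl.1.le]
    exact hl.2
  have hp : 0 < ∫ l, (z - l)⁻¹ ∂μ := by
    refine (integral_pos_iff_support_of_nonneg_ae ?_ hi).2 ?_
    · filter_upwards [hb] with l hl using hl.1.le
    · have : ∀ᵐ l ∂μ, l ∈ Function.support (fun l => (z - l)⁻¹) := by
        filter_upwards [hb] with l hl using hl.1.ne'
      exact measure_pos_of_ae_mem this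
  have e : Gst μ z = -∫ l, (z - l)⁻¹ ∂μ := by
    rw [Gst, ← integral_neg]
    congr 1; ext l; rw [← inv_neg, neg_sub]
  linarith

/-- The moments `M_n(w)` detect the left edge of the support: a geometric bound
`M_n(w) ≤ δ^{-(n+1)}` forces the mass to lie at distance at least `δ` from `w`. -/
theorem le_aInf_of_stMom_le (hc : HasCompactSupp μ) {w δ : ℝ} (hw : w < aInf μ) (hδ : 0 < δ)
    (h : ∀ n, stMom μ n w ≤ (δ⁻¹) ^ (n + 1)) : w + δ ≤ aInf μ := by
  by_contra! hlt
  -- for `x` strictly between, `μ (-∞, x) (x - w)^{-(n+1)} ≤ M_n(w) ≤ δ^{-(n+1)}` with `x - w < δ`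
  obtain ⟨x, hx1, hx2⟩ := exists_between hlt
  have hp := measure_Iio_pos hx1
  have hr : 0 < x - w := by linarith
  have hp' : 0 < μ.real (Iio x) :=
    ENNReal.toReal_pos hp.ne' (measure_ne_top _ _)
  have hle : ∀ n : ℕ, μ.real (Iio x) ≤ ((x - w) / δ) ^ (n + 1) := by
    intro n
    have h1 : μ.real (Iio x) * ((x - w)⁻¹) ^ (n + 1) ≤ stMom μ n w := by
      calc _ = ∫ l in Iio x, ((x - w)⁻¹) ^ (n + 1) ∂μ := by simp
        _ ≤ ∫ l in Iio x, ((l - w)⁻¹) ^ (n + 1) ∂μ := by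
          refine integral_mono_ae (integrable_const _)
            (integrable_kernel hc hw _).integrableOn ?_
          filter_upwards [ae_restrict_of_ae (ae_aInf_le hc),
            ae_restrict_mem measurableSet_Iio] with l hl hlx
          have : l < x := hlx
          exact pow_le_pow_left₀ (inv_nonneg.2 hr.le)
            (inv_anti₀ (by linarith) (by linarith)) _
        _ ≤ _ := by
          refine setIntegral_le_integral (integrable_kernel hc hw _) ?_
          filter_upwards [ae_kernel_bound hc hw] with l hl using pow_nonneg hl.1.le _
    have h2 := h1.trans (h n)
    rw [inv_pow, inv_pow, ← div_eq_mul_inv, div_le_iff₀ (by positivity)] at h2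
    rw [div_pow, div_eq_inv_mul]
    exact h2
  have hlim : Tendsto (fun n : ℕ => ((x - w) / δ) ^ (n + 1)) atTop (nhds 0) :=
    (tendsto_pow_atTop_nhds_zero_of_lt_one (by positivity)
      ((div_lt_one hδ).2 (by linarith))).comp (tendsto_add_atTop_nat 1)
  exact absurd (ge_of_tendsto' hlim hle) (not_le.2 hp')

end Moments

/-! ### Absolute monotonicity up to a finite order -/

/-- `f` is analytic on `S` and its derivatives of orders `0, …, n` are nonnegative there. Keeping
track of the order `n` makes it possible to bootstrap from `n` to `n + 1`. -/
def AbsMono (S : Set ℝ) (n : ℕ) (f : ℝ → ℝ) : Prop :=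
  AnalyticOnNhd ℝ f S ∧ ∀ k ≤ n, ∀ x ∈ S, 0 ≤ iteratedDeriv k f x

namespace AbsMono

variable {S J : Set ℝ} {n m : ℕ} {f g w φ : ℝ → ℝ}

theorem nonneg (h : AbsMono S n f) {x : ℝ} (hx : x ∈ S) : 0 ≤ f x := by
  simpa using h.2 0 (Nat.zero_le _) x hx

theorem mono (h : AbsMono S n f) (hm : m ≤ n) : AbsMono S m f :=
  ⟨h.1, fun k hk => h.2 k (hk.trans hm)⟩

theorem congr (hS : IsOpen S) (h : AbsMono S n f) (e : EqOn f g S) : AbsMono S n g :=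
  ⟨h.1.congr hS e, fun k hk x hx => by
    rw [← e.iteratedDeriv_of_isOpen hS k hx]; exact h.2 k hk x hx⟩

theorem deriv (h : AbsMono S (n + 1) f) : AbsMono S n (deriv f) :=
  ⟨h.1.deriv, fun k hk x hx => by
    rw [← iteratedDeriv_succ']; exact h.2 (k + 1) (by omega) x hx⟩

theorem of_deriv (ha : AnalyticOnNhd ℝ f S) (h0 : ∀ x ∈ S, 0 ≤ f x)
    (h : AbsMono S n (_root_.deriv f)) : AbsMono S (n + 1) f := by
  refine ⟨ha, fun k hk x hx => ?_⟩
  cases k with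
  | zero => simpa using h0 x hx
  | succ k => rw [iteratedDeriv_succ']; exact h.2 k (by omega) x hx

theorem zero_of (ha : AnalyticOnNhd ℝ f S) (h0 : ∀ x ∈ S, 0 ≤ f x) : AbsMono S 0 f := by
  refine ⟨ha, fun k hk x hx => ?_⟩
  obtain rfl : k = 0 := by omega
  simpa using h0 x hx

theorem const {c : ℝ} (hc : 0 ≤ c) : AbsMono S n (fun _ => c) := by
  refine ⟨analyticOnNhd_const, fun k _ x _ => ?_⟩
  rw [iteratedDeriv_const]
  split_ifs <;> simp [hc]

theorem add (hf : AbsMono S n f) (hg : AbsMono S n g) : AbsMono S n (fun x => f x + g x) := by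
  refine ⟨hf.1.add hg.1, fun k hk x hx => ?_⟩
  rw [iteratedDeriv_fun_add (hf.1 x hx).contDiffAt (hg.1 x hx).contDiffAt]
  exact add_nonneg (hf.2 k hk x hx) (hg.2 k hk x hx)

theorem mul (hf : AbsMono S n f) (hg : AbsMono S n g) : AbsMono S n (fun x => f x * g x) := by
  refine ⟨hf.1.mul hg.1, fun k hk x hx => ?_⟩
  rw [iteratedDeriv_fun_mul (hf.1 x hx).contDiffAt (hg.1 x hx).contDiffAt]
  refine Finset.sum_nonneg fun i hi => ?_
  have := Finset.mem_range.1 hi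
  exact mul_nonneg (mul_nonneg (Nat.cast_nonneg _) (hf.2 i (by omega) x hx))
    (hg.2 (k - i) (by omega) x hx)

/-- Faà di Bruno, in qualitative form: `n + 1` derivatives of `φ ∘ w` only involve `n` derivatives
of `w'`, and the value of `w` itself does not have to be nonnegative. -/
theorem comp (hS : IsOpen S) (hφ : ∀ k, AbsMono J k φ) (hw : AnalyticOnNhd ℝ w S)
    (hm : MapsTo w S J) (h : AbsMono S n (_root_.deriv w)) :
    AbsMono S (n + 1) (fun x => φ (w x)) := by
  induction n generalizing φ with
  | zero =>
    refine of_deriv ((hφ 0).1.comp hw hm) (fun x hx => (hφ 0).nonneg (hm hx)) ?_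
    have h1 : AbsMono S 0 (fun x => _root_.deriv φ (w x)) :=
      zero_of ((hφ 0).1.deriv.comp hw hm) fun x hx => (hφ 1).deriv.nonneg (hm hx)
    exact (h1.mul h).congr hS fun x hx =>
      (((hφ 0).1 _ (hm hx)).differentiableAt.hasDerivAt.comp x
        (hw x hx).differentiableAt.hasDerivAt).deriv.symm
  | succ n ih =>
    refine of_deriv ((hφ 0).1.comp hw hm) (fun x hx => (hφ 0).nonneg (hm hx)) ?_
    have h1 : AbsMono S (n + 1) (fun x => _root_.deriv φ (w x)) :=
      ih (fun k => (hφ (k + 1)).deriv) (h.mono (Nat.le_succ n))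
    exact (h1.mul h).congr hS fun x hx =>
      (((hφ 0).1 _ (hm hx)).differentiableAt.hasDerivAt.comp x
        (hw x hx).differentiableAt.hasDerivAt).deriv.symm

/-- `1 / (1 - w)` inherits nonnegativity of derivatives from `w < 1`, since its derivative is
`w' / (1 - w)²`. -/
theorem inv_one_sub (hS : IsOpen S) (h : AbsMono S n w) (h1 : ∀ x ∈ S, w x < 1) :
    AbsMono S n (fun x => (1 - w x)⁻¹) := by
  have ha : AnalyticOnNhd ℝ (fun x => (1 - w x)⁻¹) S :=
    (analyticOnNhd_const.sub h.1).inv fun x hx => (sub_pos.2 (h1 x hx)).ne'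
  have h0 : ∀ x ∈ S, 0 ≤ (1 - w x)⁻¹ := fun x hx => (inv_pos.2 (sub_pos.2 (h1 x hx))).le
  induction n with
  | zero => exact zero_of ha h0
  | succ n ih =>
    have hi := ih (h.mono (Nat.le_succ n))
    refine of_deriv ha h0 ((h.deriv.mul (hi.mul hi)).congr hS fun x hx => ?_)
    have hd := (((h.1 x hx).differentiableAt.hasDerivAt.const_sub 1).inv
      (sub_pos.2 (h1 x hx)).ne').deriv
    change _ = _root_.deriv (fun x => (1 - w x)⁻¹) x
    have e : (fun x => (1 - w x)⁻¹) = (fun x => 1 - w x)⁻¹ := rfl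
    rw [e, hd]
    have := (sub_pos.2 (h1 x hx)).ne'
    field_simp

/-- Composition with a map of slope at least one, all of whose derivatives are nonnegative, can
only increase the derivatives of an absolutely monotone function. -/
theorem iteratedDeriv_le_comp (hS : IsOpen S) (hφ : ∀ k, AbsMono J k φ)
    (hw : AnalyticOnNhd ℝ w S) (hm : MapsTo w S J)
    (h : ∀ k, AbsMono S k (fun x => _root_.deriv w x - 1)) (n : ℕ) {x : ℝ} (hx : x ∈ S) :
    iteratedDeriv n φ (w x) ≤ iteratedDeriv n (fun x => φ (w x)) x := by
  induction n generalizing φ with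
  | zero => simp
  | succ n ih =>
    have h' : ∀ k, AbsMono S k (_root_.deriv w) := fun k =>
      ((h k).add (const zero_le_one)).congr hS fun x _ => by ring
    have hφ' : ∀ k, AbsMono J k (_root_.deriv φ) := fun k => (hφ (k + 1)).deriv
    have hc : AbsMono S n (fun x => _root_.deriv φ (w x)) :=
      (comp hS hφ' hw hm (h' n)).mono (Nat.le_succ n)
    have e : EqOn (_root_.deriv (fun x => φ (w x)))
        (fun x => _root_.deriv φ (w x) + _root_.deriv φ (w x) * (_root_.deriv w x - 1)) S := by
      intro x hx
      have := (((hφ 0).1 _ (hm hx)).differentiableAt.hasDerivAt.comp x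
        (hw x hx).differentiableAt.hasDerivAt).deriv
      change _root_.deriv (φ ∘ w) x = _
      rw [this]; ring
    rw [iteratedDeriv_succ', iteratedDeriv_succ', e.iteratedDeriv_of_isOpen hS n hx,
      iteratedDeriv_fun_add (hc.1 x hx).contDiffAt ((hc.mul (h n)).1 x hx).contDiffAt]
    have := (hc.mul (h n)).2 n le_rfl x hx
    linarith [ih hφ']

end AbsMono

/-! ### The reciprocal of the Stieltjes transform -/

/-- Kaluza's theorem: if `c` is a positive log-convex sequence, the coefficients `u` of
`-1 / ∑ c_n tⁿ` are nonnegative, apart from the constant one. -/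
theorem kaluza {c u : ℕ → ℝ} (hc : ∀ n, 0 < c n)
    (hlc : ∀ n, c (n + 1) ^ 2 ≤ c n * c (n + 2))
    (h0 : u 0 * c 0 = -1)
    (h : ∀ n, ∑ k ∈ Finset.range (n + 2), u k * c (n + 1 - k) = 0) (n : ℕ) : 0 ≤ u (n + 1) := by
  have hu0 : u 0 ≤ 0 := by
    by_contra! hu
    linarith [mul_pos hu (hc 0)]
  have hr : Monotone fun n => c (n + 1) / c n := monotone_nat_of_le_succ fun n => by
    rw [div_le_div_iff₀ (hc n) (hc (n + 1))]
    linarith [hlc n, sq (c (n + 1)), mul_comm (c n) (c (n + 2))]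
  induction n using Nat.strong_induction_on with
  | _ n ih =>
  refine le_of_mul_le_mul_right ?_ (hc 0)
  rw [zero_mul]
  cases n with
  | zero =>
    have h1 := h 0
    rw [Finset.sum_range_succ, Finset.sum_range_one] at h1
    have := mul_nonpos_of_nonpos_of_nonneg hu0 (hc 1).le
    simp at h1
    linarith
  | succ n =>
    have h1 := h (n + 1)
    have h2 := h n
    rw [Finset.sum_range_succ] at h1
    -- subtract `c (n + 2) / c (n + 1)` times the previous relation, so that `u 0` drops out
    set r := c (n + 2) / c (n + 1) with hrdef
    have h3 : ∑ k ∈ Finset.range (n + 2), u k * (c (n + 1 + 1 - k) - r * c (n + 1 - k)) ≤ 0 := by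
      refine Finset.sum_nonpos fun k hk => ?_
      have hk' := Finset.mem_range.1 hk
      cases k with
      | zero =>
        have : r * c (n + 1) = c (n + 2) := div_mul_cancel₀ _ (hc _).ne'
        simp [this]
      | succ k =>
        refine mul_nonpos_of_nonneg_of_nonpos (ih k (by omega)) ?_
        have := hr (show n - k ≤ n + 1 by omega)
        simp only at this
        rw [div_le_iff₀ (hc _)] at this
        have e1 : n + 1 + 1 - (k + 1) = n - k + 1 := by omega
        have e2 : n + 1 - (k + 1) = n - k := by omega
        rw [e1, e2]
        linarith
    have h4 : ∑ k ∈ Finset.range (n + 2), u k * (c (n + 1 + 1 - k) - r * c (n + 1 - k)) =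
        ∑ k ∈ Finset.range (n + 2), u k * c (n + 1 + 1 - k) -
          r * ∑ k ∈ Finset.range (n + 2), u k * c (n + 1 - k) := by
      rw [Finset.mul_sum, ← Finset.sum_sub_distrib]
      exact Finset.sum_congr rfl fun k _ => by ring
    rw [h4, h2] at h3
    simp at h1
    linarith

/-- `F_μ = -1 / G_μ`. -/
noncomputable def recipG (μ : Measure ℝ) (z : ℝ) : ℝ := -(Gst μ z)⁻¹

section Recip

variable {μ : Measure ℝ} [IsProbabilityMeasure μ]

theorem analyticOnNhd_Gst (hc : HasCompactSupp μ) : AnalyticOnNhd ℝ (Gst μ) (Iio (aInf μ)) :=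
  fun _ hx => analyticAt_Gst hc hx

theorem analyticOnNhd_recipG (hc : HasCompactSupp μ) :
    AnalyticOnNhd ℝ (recipG μ) (Iio (aInf μ)) :=
  ((analyticOnNhd_Gst hc).inv fun _ hx => (Gst_pos hc hx).ne').neg

theorem absMono_Gst (hc : HasCompactSupp μ) (n : ℕ) : AbsMono (Iio (aInf μ)) n (Gst μ) :=
  ⟨analyticOnNhd_Gst hc, fun k _ x hx => by
    rw [iteratedDeriv_Gst hc hx]
    exact mul_nonneg (Nat.cast_nonneg _) (stMom_pos hc hx k).le⟩

/-- Kaluza's theorem applied to the Taylor series at `z`: the Leibniz rule for `F_μ G_μ = -1` is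
the convolution identity between the Taylor coefficients of `F_μ` and those of `G_μ`. -/
theorem iteratedDeriv_recipG_nonneg (hc : HasCompactSupp μ) {z : ℝ} (hz : z < aInf μ) (n : ℕ) :
    0 ≤ iteratedDeriv (n + 1) (recipG μ) z := by
  have key := kaluza (c := fun n => stMom μ n z)
    (u := fun n => iteratedDeriv n (recipG μ) z / n.factorial)
    (stMom_pos hc hz) (stMom_logConvex hc hz) ?_ ?_ n
  · have := mul_nonneg key (Nat.cast_nonneg (α := ℝ) (n + 1).factorial)
    rwa [div_mul_cancel₀ _ (by positivity)] at this
  · have := (Gst_pos hc hz).ne'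
    simp [recipG, stMom_zero, this]
  · intro m
    have e : EqOn (fun x => recipG μ x * Gst μ x) (fun _ => (-1 : ℝ)) (Iio (aInf μ)) := by
      intro x hx
      have := (Gst_pos hc hx).ne'
      simp [recipG, this]
    have h1 := e.iteratedDeriv_of_isOpen isOpen_Iio (m + 1) hz
    rw [iteratedDeriv_fun_mul (analyticOnNhd_recipG hc z hz).contDiffAt
      (analyticAt_Gst hc hz).contDiffAt, iteratedDeriv_const, if_neg (Nat.succ_ne_zero m)] at h1
    have h2 : ∀ k ∈ Finset.range (m + 1 + 1),
        ((m + 1).choose k : ℝ) * iteratedDeriv k (recipG μ) z *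
          iteratedDeriv (m + 1 - k) (Gst μ) z = (m + 1).factorial *
        (iteratedDeriv k (recipG μ) z / k.factorial * stMom μ (m + 1 - k) z) := by
      intro k hk
      have hk' := Finset.mem_range.1 hk
      rw [iteratedDeriv_Gst hc hz, Nat.cast_choose ℝ (show k ≤ m + 1 by omega)]
      field_simp
    rw [Finset.sum_congr rfl h2, ← Finset.mul_sum] at h1
    exact (mul_eq_zero.1 h1).resolve_left (by positivity)

/-- All derivatives of `F_μ(z) - z` of order at least one are nonnegative on `(-∞, a_μ)`. -/
theorem absMono_deriv_recipG_sub_one (hc : HasCompactSupp μ) (n : ℕ) :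
    AbsMono (Iio (aInf μ)) n (fun z => deriv (recipG μ) z - 1) := by
  refine ⟨(analyticOnNhd_recipG hc).deriv.sub analyticOnNhd_const, fun k _ x hx => ?_⟩
  rw [iteratedDeriv_fun_sub ((analyticOnNhd_recipG hc).deriv x hx).contDiffAt contDiffAt_const,
    iteratedDeriv_const]
  cases k with
  | zero =>
    have hd : deriv (recipG μ) x = stMom μ 1 x / Gst μ x ^ 2 := by
      have := ((hasDerivAt_Gst hc hx).inv (Gst_pos hc hx).ne').neg.deriv
      have e : recipG μ = -(Gst μ)⁻¹ := rfl
      rw [e, this]; ring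
    have h := stMom_sq_le hc hx
    rw [stMom_zero] at h
    have := (one_le_div (pow_pos (Gst_pos hc hx) 2)).2 h
    simpa [hd] using this
  | succ k =>
    rw [← iteratedDeriv_succ']
    simpa using iteratedDeriv_recipG_nonneg hc hx (k + 1)

end Recip

/-! ### The functional inverse of the Stieltjes transform -/

theorem lt_GaSup_of_neg_mem {μ : Measure ℝ} {g : ℝ} (h : -g ∈ Dhat μ) : (g : EReal) < GaSup μ := by
  have := h.1
  rwa [EReal.coe_neg, EReal.neg_lt_neg_iff] at this

section Inverse

variable {μ : Measure ℝ} [IsProbabilityMeasure μ]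

theorem Ginv_Gst (hc : HasCompactSupp μ) {w : ℝ} (hw : w < aInf μ) :
    Ginv μ (Gst μ w) = w := by
  have hex : ∃ x ∈ Iio (aInf μ) ∪ Ioi (bSup μ), Gst μ x = Gst μ w := ⟨w, Or.inl hw, rfl⟩
  have hm := Function.invFunOn_mem hex
  have he := Function.invFunOn_eq hex
  change Ginv μ (Gst μ w) ∈ _ at hm
  change Gst μ (Ginv μ (Gst μ w)) = _ at he
  rcases hm with hm | hm
  · exact (strictMonoOn_Gst hc).injOn hm hw he
  · exact absurd (Gst_pos hc hw) (by rw [← he]; exact (Gst_neg_of_gt hc hm).not_gt)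

theorem Gst_lt_GaSup (hc : HasCompactSupp μ) {w : ℝ} (hw : w < aInf μ) :
    ((Gst μ w : ℝ) : EReal) < GaSup μ := by
  obtain ⟨w', h1, h2⟩ := exists_between hw
  exact (EReal.coe_lt_coe_iff.2 (strictMonoOn_Gst hc hw h2 h1)).trans_le
    (le_sSup ⟨w', h2, rfl⟩)

theorem exists_Gst_eq (hc : HasCompactSupp μ) {g : ℝ} (hg : 0 < g) (h : (g : EReal) < GaSup μ) :
    ∃ w < aInf μ, Gst μ w = g := by
  obtain ⟨_, ⟨w', hw', rfl⟩, h2⟩ := lt_sSup_iff.1 h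
  have h2 : g < Gst μ w' := EReal.coe_lt_coe_iff.1 h2
  have h3 : aInf μ - g⁻¹ < aInf μ := by linarith [inv_pos.2 hg]
  have h4 : Gst μ (aInf μ - g⁻¹) ≤ g := by simpa using Gst_le hc h3
  exact isPreconnected_Iio.intermediate_value h3 hw' (analyticOnNhd_Gst hc).continuousOn
    ⟨h4, h2.le⟩

theorem neg_mem_Dhat (hc : HasCompactSupp μ) {g : ℝ} (hg : 0 < g) (h : (g : EReal) < GaSup μ) :
    -g ∈ Dhat μ := by
  refine ⟨by rw [EReal.coe_neg]; exact EReal.neg_lt_neg_iff.2 h, ?_⟩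
  rw [EReal.coe_neg, EReal.neg_lt_neg_iff]
  have h1 : GbInf μ ≤ ((Gst μ (bSup μ + 1) : ℝ) : EReal) :=
    sInf_le ⟨bSup μ + 1, by simp, rfl⟩
  refine h1.trans_lt (EReal.coe_lt_coe_iff.2 ?_)
  linarith [Gst_neg_of_gt hc (show bSup μ < bSup μ + 1 by linarith)]

theorem analyticAt_Ginv (hc : HasCompactSupp μ) {w : ℝ} (hw : w < aInf μ) :
    AnalyticAt ℝ (Ginv μ) (Gst μ w) := by
  have hcd : ContDiffAt ℝ ⊤ (Gst μ) w := (analyticAt_Gst hc hw).contDiffAt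
  have hd : HasFDerivAt (Gst μ) ((ContinuousLinearEquiv.unitsEquivAut ℝ
      (Units.mk0 (stMom μ 1 w) (stMom_pos hc hw 1).ne') : ℝ ≃L[ℝ] ℝ) : ℝ →L[ℝ] ℝ) w := by
    convert! (hasDerivAt_Gst hc hw).hasFDerivAt using 1
  have hn : (⊤ : WithTop ℕ∞) ≠ 0 := by simp
  have h1 := hcd.to_localInverse hd hn
  have h2 := (hcd.hasStrictFDerivAt' hd hn).eventually_right_inverse
  have h3 : ∀ᶠ y in nhds (Gst μ w), hcd.localInverse hd hn y < aInf μ := by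
    refine h1.continuousAt.eventually_lt continuousAt_const ?_
    rw [hcd.localInverse_apply_image hd hn]; exact hw
  refine h1.analyticAt.congr ?_
  filter_upwards [h2, h3] with y hy hy'
  have hy : Gst μ (hcd.localInverse hd hn y) = y := hy
  conv_rhs => rw [← hy]
  exact (Ginv_Gst hc hy').symm

end Inverse

/-! ### Subordination -/

/-- Bootstrap for a pair of subordination functions: if `ω₁' = 1 + α(ω₂) ω₂'` and
`ω₂' = 1 + β(ω₁) ω₁'` with `α`, `β` absolutely monotone, and if `ω₁'`, `ω₂'` are positive, then
solving the linear system gives `ω₁' = (1 + α(ω₂)) / (1 - α(ω₂) β(ω₁))`, so that control of `n`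
derivatives of `ω₁'`, `ω₂'` yields control of `n + 1`. -/
theorem absMono_subordination {S J₁ J₂ : Set ℝ} {ω₁ ω₂ α β : ℝ → ℝ} (hS : IsOpen S)
    (ha₁ : AnalyticOnNhd ℝ ω₁ S) (ha₂ : AnalyticOnNhd ℝ ω₂ S)
    (hm₁ : MapsTo ω₁ S J₁) (hm₂ : MapsTo ω₂ S J₂)
    (hα : ∀ n, AbsMono J₂ n α) (hβ : ∀ n, AbsMono J₁ n β)
    (h₁ : ∀ x ∈ S, deriv ω₁ x = 1 + α (ω₂ x) * deriv ω₂ x)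
    (h₂ : ∀ x ∈ S, deriv ω₂ x = 1 + β (ω₁ x) * deriv ω₁ x)
    (hp₁ : ∀ x ∈ S, 0 < deriv ω₁ x) (hp₂ : ∀ x ∈ S, 0 < deriv ω₂ x) (n : ℕ) :
    AbsMono S n (deriv ω₁) ∧ AbsMono S n (deriv ω₂) := by
  induction n with
  | zero => exact ⟨.zero_of ha₁.deriv fun x hx => (hp₁ x hx).le,
      .zero_of ha₂.deriv fun x hx => (hp₂ x hx).le⟩
  | succ n ih =>
    have hA := AbsMono.comp hS hα ha₂ hm₂ ih.2
    have hB := AbsMono.comp hS hβ ha₁ hm₁ ih.1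
    have e₁ : ∀ x ∈ S, deriv ω₁ x * (1 - α (ω₂ x) * β (ω₁ x)) = 1 + α (ω₂ x) := fun x hx => by
      linear_combination h₁ x hx + α (ω₂ x) * h₂ x hx
    have e₂ : ∀ x ∈ S, deriv ω₂ x * (1 - α (ω₂ x) * β (ω₁ x)) = 1 + β (ω₁ x) := fun x hx => by
      linear_combination h₂ x hx + β (ω₁ x) * h₁ x hx
    have hlt : ∀ x ∈ S, α (ω₂ x) * β (ω₁ x) < 1 := fun x hx => by
      have : 0 < deriv ω₁ x * (1 - α (ω₂ x) * β (ω₁ x)) := by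
        rw [e₁ x hx]; linarith [hA.nonneg hx]
      linarith [(pos_iff_pos_of_mul_pos this).1 (hp₁ x hx)]
    have hI := AbsMono.inv_one_sub hS (hA.mul hB) hlt
    have h1 : AbsMono S (n + 1) fun _ => (1 : ℝ) := .const zero_le_one
    constructor
    · refine ((h1.add hA).mul hI).congr hS fun x hx => ?_
      rw [← e₁ x hx, mul_assoc, mul_inv_cancel₀ (sub_pos.2 (hlt x hx)).ne', mul_one]
    · refine ((h1.add hB).mul hI).congr hS fun x hx => ?_
      rw [← e₂ x hx, mul_assoc, mul_inv_cancel₀ (sub_pos.2 (hlt x hx)).ne', mul_one]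

/-- The set of `z < a_ρ` at which `G_ρ(z)` is a value of both `G_μ` on `(-∞, a_μ)` and
`G_ν` on `(-∞, a_ν)`. -/
def subDom (μ ν ρ : Measure ℝ) : Set ℝ :=
  {z | z < aInf ρ ∧ ((Gst ρ z : ℝ) : EReal) < GaSup μ ∧ ((Gst ρ z : ℝ) : EReal) < GaSup ν}

/-- The subordination function `ω = G_μ^⟨-1⟩ ∘ G_ρ`. -/
noncomputable def subFun (μ ρ : Measure ℝ) (z : ℝ) : ℝ := Ginv μ (Gst ρ z)

section Main

variable {μ ν ρ : Measure ℝ}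

theorem subDom_comm : subDom μ ν ρ = subDom ν μ ρ := by
  ext z; simp only [subDom, mem_ofPred_eq]; tauto

theorem isOpen_subDom [IsProbabilityMeasure ρ] (hcρ : HasCompactSupp ρ) :
    IsOpen (subDom μ ν ρ) := by
  rw [isOpen_iff_mem_nhds]
  rintro z ⟨h1, h2, h3⟩
  have hcont : ContinuousAt (fun z => ((Gst ρ z : ℝ) : EReal)) z :=
    continuous_coe_real_ereal.continuousAt.comp (analyticAt_Gst hcρ h1).continuousAt
  filter_upwards [Iio_mem_nhds h1, hcont.eventually_lt continuousAt_const h2,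
    hcont.eventually_lt continuousAt_const h3] with x a b c using ⟨a, b, c⟩

theorem subDom_lower [IsProbabilityMeasure ρ] (hcρ : HasCompactSupp ρ) {x z : ℝ}
    (hz : z ∈ subDom μ ν ρ) (hx : x ≤ z) : x ∈ subDom μ ν ρ := by
  have h := hx.trans_lt hz.1
  have hle : ((Gst ρ x : ℝ) : EReal) ≤ (Gst ρ z : ℝ) :=
    EReal.coe_le_coe_iff.2 ((strictMonoOn_Gst hcρ).monotoneOn h hz.1 hx)
  exact ⟨h, hle.trans_lt hz.2.1, hle.trans_lt hz.2.2⟩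

theorem isPreconnected_subDom [IsProbabilityMeasure ρ] (hcρ : HasCompactSupp ρ) :
    IsPreconnected (subDom μ ν ρ) :=
  OrdConnected.isPreconnected ⟨fun _ _ _ hy _ hz => subDom_lower hcρ hy hz.2⟩

theorem subFun_spec [IsProbabilityMeasure μ] [IsProbabilityMeasure ρ]
    (hcμ : HasCompactSupp μ) (hcρ : HasCompactSupp ρ) {z : ℝ}
    (hz : z ∈ subDom μ ν ρ) :
    subFun μ ρ z < aInf μ ∧ Gst μ (subFun μ ρ z) = Gst ρ z := by
  obtain ⟨w, hw, e⟩ := exists_Gst_eq hcμ (Gst_pos hcρ hz.1) hz.2.1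
  rw [subFun, ← e, Ginv_Gst hcμ hw]
  exact ⟨hw, rfl⟩

theorem analyticOnNhd_subFun [IsProbabilityMeasure μ] [IsProbabilityMeasure ρ]
    (hcμ : HasCompactSupp μ) (hcρ : HasCompactSupp ρ) :
    AnalyticOnNhd ℝ (subFun μ ρ) (subDom μ ν ρ) := by
  intro z hz
  have h := subFun_spec hcμ hcρ hz
  have h1 := analyticAt_Ginv hcμ h.1
  rw [h.2] at h1
  exact h1.comp (analyticAt_Gst hcρ hz.1)

theorem deriv_subFun_pos [IsProbabilityMeasure μ] [IsProbabilityMeasure ρ]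
    (hcμ : HasCompactSupp μ) (hcρ : HasCompactSupp ρ) {z : ℝ}
    (hz : z ∈ subDom μ ν ρ) : 0 < deriv (subFun μ ρ) z := by
  have h := subFun_spec hcμ hcρ hz
  have h1 := (hasDerivAt_Gst hcμ h.1).comp z
    (analyticOnNhd_subFun hcμ hcρ z hz).differentiableAt.hasDerivAt
  have h2 : HasDerivAt (Gst μ ∘ subFun μ ρ) (stMom ρ 1 z) z :=
    (hasDerivAt_Gst hcρ hz.1).congr_of_eventuallyEq (by
      filter_upwards [(isOpen_subDom hcρ).mem_nhds hz] with x hx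
      exact (subFun_spec hcμ hcρ hx).2)
  have h3 := h1.unique h2
  refine pos_of_mul_pos_right ?_ (stMom_pos hcμ h.1 1).le
  rw [h3]
  exact stMom_pos hcρ hz.1 1

theorem IsFreeAdd.symm (hρ : IsFreeAdd μ ν ρ) : IsFreeAdd ν μ ρ := by
  obtain ⟨h1, h2, ε, hε, h⟩ := hρ
  refine ⟨h1, h2, ε, hε, fun u hu hu0 => ?_⟩
  obtain ⟨a, b, c, d⟩ := h u hu hu0
  exact ⟨a, c, b, by rw [d, add_comm]⟩

variable [IsProbabilityMeasure μ] [IsProbabilityMeasure ν] [IsProbabilityMeasure ρ]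

/-- The relation between `R`-transforms, in terms of subordination functions:
`ω₁(z) + ω₂(z) = z - 1 / G_ρ(z)`. It holds near `-∞` by assumption, and propagates by the
identity theorem. -/
theorem subFun_add (hcμ : HasCompactSupp μ) (hcν : HasCompactSupp ν) (hρ : IsFreeAdd μ ν ρ)
    {z : ℝ} (hz : z ∈ subDom μ ν ρ) :
    subFun μ ρ z + subFun ν ρ z = z + recipG ρ z := by
  obtain ⟨-, hcρ, ε, hε, h⟩ := hρ
  have hfar : ∀ x < aInf ρ - ε⁻¹, x ∈ subDom μ ν ρ ∧
      subFun μ ρ x + subFun ν ρ x = x + recipG ρ x := by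
    intro x hx
    have hεi := inv_pos.2 hε
    have hxa : x < aInf ρ := by linarith
    have hpos := Gst_pos hcρ hxa
    have hlt : Gst ρ x < ε := by
      refine (Gst_le hcρ hxa).trans_lt ?_
      rw [inv_lt_comm₀ (by linarith) hε]
      linarith
    obtain ⟨-, hμ, hν, hR⟩ := h (-(Gst ρ x)) ⟨by linarith, by linarith⟩ (by linarith)
    refine ⟨⟨hxa, lt_GaSup_of_neg_mem hμ, lt_GaSup_of_neg_mem hν⟩, ?_⟩
    simp only [Rhat, neg_neg, inv_neg, sub_neg_eq_add, Ginv_Gst hcρ hxa] at hR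
    simp only [subFun, recipG]
    linarith
  have hmem : aInf ρ - ε⁻¹ - 1 < aInf ρ - ε⁻¹ := by linarith
  refine AnalyticOnNhd.eqOn_of_preconnected_of_eventuallyEq (𝕜 := ℝ)
    (f := fun x => subFun μ ρ x + subFun ν ρ x) (g := fun x => x + recipG ρ x)
    (U := subDom μ ν ρ) (z₀ := aInf ρ - ε⁻¹ - 1) ?_ ?_ (isPreconnected_subDom hcρ)
    (hfar _ hmem).1 ?_ hz
  · refine (analyticOnNhd_subFun hcμ hcρ).add ?_
    rw [subDom_comm]
    exact analyticOnNhd_subFun hcν hcρ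
  · have hid : AnalyticOnNhd ℝ (fun x : ℝ => x) (subDom μ ν ρ) := fun x _ => analyticAt_id
    exact hid.add ((analyticOnNhd_recipG hcρ).mono fun x hx => hx.1)
  · filter_upwards [Iio_mem_nhds hmem] with x hx using (hfar x hx).2

/-- Since `ω₁ = z + F_ν(ω₂) - ω₂`, one has `ω₁' = 1 + (F_ν'(ω₂) - 1) ω₂'`. -/
theorem deriv_subFun (hcμ : HasCompactSupp μ) (hcν : HasCompactSupp ν) (hρ : IsFreeAdd μ ν ρ)
    {z : ℝ} (hz : z ∈ subDom μ ν ρ) :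
    deriv (subFun μ ρ) z =
      1 + (deriv (recipG ν) (subFun ν ρ z) - 1) * deriv (subFun ν ρ) z := by
  have hcρ := hρ.2.1
  have hz' : z ∈ subDom ν μ ρ := by rwa [subDom_comm]
  have hω := (analyticOnNhd_subFun hcν hcρ z hz').differentiableAt.hasDerivAt
  have hF := ((analyticOnNhd_recipG hcν _
    (subFun_spec hcν hcρ hz').1).differentiableAt.hasDerivAt).comp z hω
  have h1 := ((hasDerivAt_id z).add hF).sub hω
  have hev : subFun μ ρ =ᶠ[nhds z] id + recipG ν ∘ subFun ν ρ - subFun ν ρ := by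
    filter_upwards [(isOpen_subDom hcρ).mem_nhds hz] with x hx
    have hx' : x ∈ subDom ν μ ρ := by rwa [subDom_comm]
    have e := subFun_add hcμ hcν hρ hx
    have e2 : recipG ν (subFun ν ρ x) = recipG ρ x := by
      rw [recipG, recipG, (subFun_spec hcν hcρ hx').2]
    simp only [Pi.sub_apply, Pi.add_apply, id, Function.comp_apply, e2]
    linarith
  rw [(h1.congr_of_eventuallyEq hev).deriv]; ring

/-- Quantitative form of subordination: `a_μ - ω₁(z) ≥ a_ρ - z`. The Taylor coefficients of
`G_μ` at `ω₁(z)` are dominated by those of `G_ρ = G_μ ∘ ω₁` at `z`. -/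
theorem subFun_add_le (hcμ : HasCompactSupp μ) (hcν : HasCompactSupp ν) (hρ : IsFreeAdd μ ν ρ)
    {z : ℝ} (hz : z ∈ subDom μ ν ρ) : subFun μ ρ z + (aInf ρ - z) ≤ aInf μ := by
  have hcρ := hρ.2.1
  have hS := isOpen_subDom (μ := μ) (ν := ν) hcρ
  have hc : subDom ν μ ρ = subDom μ ν ρ := subDom_comm
  have ha₁ : AnalyticOnNhd ℝ (subFun μ ρ) (subDom μ ν ρ) := analyticOnNhd_subFun hcμ hcρ
  have ha₂ : AnalyticOnNhd ℝ (subFun ν ρ) (subDom μ ν ρ) := hc ▸ analyticOnNhd_subFun hcν hcρ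
  have hm₁ : MapsTo (subFun μ ρ) (subDom μ ν ρ) (Iio (aInf μ)) := fun x hx =>
    (subFun_spec hcμ hcρ hx).1
  have hm₂ : MapsTo (subFun ν ρ) (subDom μ ν ρ) (Iio (aInf ν)) := fun x hx =>
    (subFun_spec hcν hcρ (hc ▸ hx)).1
  have h₁ : ∀ x ∈ subDom μ ν ρ, deriv (subFun μ ρ) x =
      1 + (deriv (recipG ν) (subFun ν ρ x) - 1) * deriv (subFun ν ρ) x := fun x hx =>
    deriv_subFun hcμ hcν hρ hx
  have key := absMono_subordination hS ha₁ ha₂ hm₁ hm₂ (absMono_deriv_recipG_sub_one hcν)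
    (absMono_deriv_recipG_sub_one hcμ) h₁
    (fun x hx => deriv_subFun hcν hcμ hρ.symm (hc ▸ hx))
    (fun x hx => deriv_subFun_pos hcμ hcρ hx)
    (fun x hx => deriv_subFun_pos hcν hcρ (hc ▸ hx))
  have hsub : ∀ k, AbsMono (subDom μ ν ρ) k (fun x => deriv (subFun μ ρ) x - 1) := fun k =>
    (((AbsMono.comp hS (absMono_deriv_recipG_sub_one hcν) ha₂ hm₂ (key k).2).mono
      (Nat.le_succ k)).mul (key k).2).congr hS fun x hx => by
        rw [h₁ x hx]; ring
  refine le_aInf_of_stMom_le hcμ (hm₁ hz) (sub_pos.2 hz.1) fun n => ?_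
  refine le_trans ?_ (stMom_le hcρ hz.1 n)
  have h := AbsMono.iteratedDeriv_le_comp hS (absMono_Gst hcμ) ha₁ hm₁ hsub n hz
  have e : EqOn (fun x => Gst μ (subFun μ ρ x)) (Gst ρ) (subDom μ ν ρ) := fun x hx =>
    (subFun_spec hcμ hcρ hx).2
  rw [e.iteratedDeriv_of_isOpen hS n hz, iteratedDeriv_Gst hcμ (hm₁ hz),
    iteratedDeriv_Gst hcρ hz.1] at h
  exact le_of_mul_le_mul_left h (by positivity)

/-- The subordination functions are defined on all of `(-∞, a_ρ)`. If `G_ρ` reached the edge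
value of `G_μ` or `G_ν` at or before `z < a_ρ`, it would pass just before through a value taken
at distance `(a_ρ - z) / 2` from the corresponding edge, whereas `subFun_add_le` keeps `ω₁` and
`ω₂` at distance at least `a_ρ - z`. -/
theorem mem_subDom (hcμ : HasCompactSupp μ) (hcν : HasCompactSupp ν) (hρ : IsFreeAdd μ ν ρ)
    {z : ℝ} (hz : z < aInf ρ) : z ∈ subDom μ ν ρ := by
  have hcρ := hρ.2.1
  by_contra hn
  have hδ : 0 < aInf ρ - z := sub_pos.2 hz
  have hμ : aInf μ - (aInf ρ - z) / 2 < aInf μ := by linarith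
  have hν : aInf ν - (aInf ρ - z) / 2 < aInf ν := by linarith
  obtain ⟨M, hM⟩ : ∃ M, M = min (Gst μ (aInf μ - (aInf ρ - z) / 2))
    (Gst ν (aInf ν - (aInf ρ - z) / 2)) := ⟨_, rfl⟩
  have hMμ : ∀ x ≤ M, (x : EReal) < GaSup μ := fun x hx =>
    (EReal.coe_le_coe_iff.2 (hx.trans (hM.trans_le (min_le_left _ _)))).trans_lt
      (Gst_lt_GaSup hcμ hμ)
  have hMν : ∀ x ≤ M, (x : EReal) < GaSup ν := fun x hx =>
    (EReal.coe_le_coe_iff.2 (hx.trans (hM.trans_le (min_le_right _ _)))).trans_lt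
      (Gst_lt_GaSup hcν hν)
  have hM0 : 0 < M := by rw [hM]; exact lt_min (Gst_pos hcμ hμ) (Gst_pos hcν hν)
  have hMz : M < Gst ρ z := by
    by_contra! hle
    exact hn ⟨hz, hMμ _ hle, hMν _ hle⟩
  obtain ⟨y, hy, hyM⟩ := exists_Gst_eq hcρ hM0
    ((EReal.coe_lt_coe_iff.2 hMz).trans (Gst_lt_GaSup hcρ hz))
  have hyz : y < z := ((strictMonoOn_Gst hcρ).lt_iff_lt hy hz).1 (by rwa [hyM])
  have hyS : y ∈ subDom μ ν ρ := ⟨hy, hMμ _ hyM.le, hMν _ hyM.le⟩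
  have hyS' : y ∈ subDom ν μ ρ := by rwa [subDom_comm]
  have h1 := subFun_spec hcμ hcρ hyS
  have h2 := subFun_spec hcν hcρ hyS'
  have h3 := strictMonoOn_Gst hcμ h1.1 hμ (by linarith [subFun_add_le hcμ hcν hρ hyS])
  have h4 := strictMonoOn_Gst hcν h2.1 hν (by linarith [subFun_add_le hcν hcμ hρ.symm hyS'])
  rw [h1.2, hyM] at h3
  rw [h2.2, hyM] at h4
  exact absurd (lt_min h3 h4) (by rw [← hM]; exact lt_irrefl _)

end Main

/-! ### The fixed point equation -/

/-- for `z < z*_ρ`, `g = G_ρ(z)` lies in `(0, g*_ρ)`, `-g ∈ D̂_μ`,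
`z - R̂_μ(-g) < a_ν`, and it solves the fixed point equation. -/
theorem statement7 (μ ν ρ : MeasureTheory.Measure ℝ)
    [MeasureTheory.IsProbabilityMeasure μ] [MeasureTheory.IsProbabilityMeasure ν]
    (hcμ : HasCompactSupp μ) (hcν : HasCompactSupp ν)
    (hρ : IsFreeAdd μ ν ρ) :
    ∀ z : ℝ, z < aInf ρ →
      0 < Gst ρ z ∧ ((Gst ρ z : ℝ) : EReal) < GaSup ρ ∧
      -(Gst ρ z) ∈ Dhat μ ∧
      z - Rhat μ (-(Gst ρ z)) < aInf ν ∧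
      Gst ν (z - Rhat μ (-(Gst ρ z))) = Gst ρ z ∧
      ∫ l, (l - z + Rhat μ (-(Gst ρ z)))⁻¹ ∂ν = Gst ρ z := by
  intro z hz
  have := hρ.1
  have hcρ := hρ.2.1
  have hS := mem_subDom hcμ hcν hρ hz
  have hS' : z ∈ subDom ν μ ρ := by rwa [subDom_comm]
  have h2 := subFun_spec hcν hcρ hS'
  have e : z - Rhat μ (-(Gst ρ z)) = subFun ν ρ z := by
    have := subFun_add hcμ hcν hρ hS
    simp only [subFun, recipG] at this
    simp only [Rhat, neg_neg, inv_neg, subFun]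
    linarith
  refine ⟨Gst_pos hcρ hz, Gst_lt_GaSup hcρ hz, neg_mem_Dhat hcμ (Gst_pos hcρ hz) hS.2.1, ?_⟩
  rw [e]
  refine ⟨h2.1, h2.2, ?_⟩
  have e3 : ∀ l : ℝ, l - z + Rhat μ (-(Gst ρ z)) = l - subFun ν ρ z := fun l => by
    rw [← e]; ring
  simp only [e3]
  exact h2.2
end

section
/- Let μ and ν be compactly supported probability measures on ℝ with μ nondegenerate, and let ρ be a free additive convolution of μ and ν. Then for every real z < z*_ρ one has U_ρ(z) = E_{μ,ν,z}(G_ρ(z)). -/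
/-!
The theorem has two parts: subordination on the whole half-line `z < a_ρ`, and a calculus identity.

**Subordination.** For `z < a_ρ` there are `w < a_μ` and `v < a_ν` with
`G_μ(w) = G_ν(v) = G_ρ(z)` and `w + v = z - 1 / G_ρ(z)` (lemma `solvable`). For `z` close to `-∞`
this is the definition of a free additive convolution, and by analyticity it persists to the right
as long as `w` and `v` stay away from `a_μ` and `a_ν`. It is thus enough to bound these distances
from below, and this is done on the real line only.

* Put `F_μ = -1 / G_μ` and `k_μ = F_μ' - 1`. The Taylor coefficients of `G_μ` at a point left of the
  support are the moments of `(λ - z)⁻¹`, a log-convex sequence by Cauchy–Schwarz. By Kaluza's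
  theorem (`kaluza`) the Taylor coefficients of `F_μ` of positive order are nonnegative, so `k_μ` is
  absolutely monotone (`AM_kap`).
* Differentiating `w + v = z + F_μ(w) = z + F_ν(v)` gives `v' = 1 + k_μ(w) w'` and
  `w' = 1 + k_ν(v) v'`, so `w' = (1 + k_ν(v)) / (1 - k_μ(w) k_ν(v))`, and symmetrically for `v'`.
  Each derivative order of absolute monotonicity of `w'`, `v'` yields the next (`AM_deriv`).
* Consequently the Taylor coefficients of `G_ρ` at `z` dominate those of `G_μ` at `w(z)` (`AM_sub`);
  their growth rates are `(a_ρ - z)⁻¹` and `(a_μ - w)⁻¹`, whence `a_μ - w(z) ≥ a_ρ - z` (`dist_le`).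

**Calculus.** Substituting `s = G_μ(y)` shows `∫₀^g s R̂_μ'(-s) ds = U_μ(w) + log g` for `g = G_μ(w)`
(`integral_Rhat`), and likewise for `ν` and `ρ`. With `g = G_ρ(z)`, subordination gives
`R̂_ρ' = R̂_μ' + R̂_ν'` on `(-g, 0)`, hence
`U_ρ(z) + log g = ∫₀^g s R̂_μ'(-s) ds + U_ν(v) + log g`. Since `R̂_μ(-g) = w + 1/g = z - v`, the
term `U_ν(v)` is the second summand of `E_{μ,ν,z}(g)`.
-/

open MeasureTheory Filter Set

namespace FreeAdd

open scoped Topology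

/-! ### Support and moments of the resolvent -/

/-- `mom μ n z = ∫ (λ - z)^{-(n+1)} dμ(λ)`, the `n`-th Taylor coefficient of `G_μ` at `z`. -/
noncomputable def mom (μ : Measure ℝ) (n : ℕ) (z : ℝ) : ℝ := ∫ l, ((l - z)⁻¹) ^ (n + 1) ∂μ

lemma mom_zero {μ : Measure ℝ} (z : ℝ) : mom μ 0 z = Gst μ z := by simp [mom, Gst]

section basics

variable {μ : Measure ℝ} [IsProbabilityMeasure μ]

lemma msupp_eq_support (μ : Measure ℝ) : msupp μ = μ.support := by
  ext x
  simp [msupp, Measure.mem_support_iff_forall, pos_iff_ne_zero]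

lemma msupp_ae (μ : Measure ℝ) : ∀ᵐ l ∂μ, l ∈ msupp μ := by
  rw [msupp_eq_support]
  exact Measure.support_mem_ae

lemma msupp_subset (hc : HasCompactSupp μ) : ∃ K : Set ℝ, IsCompact K ∧ msupp μ ⊆ K := by
  obtain ⟨K, hK, h1⟩ := hc
  refine ⟨K, hK, fun x hx => ?_⟩
  by_contra hxK
  refine hx Kᶜ (hK.isClosed.isOpen_compl.mem_nhds hxK) ?_
  rw [prob_compl_eq_zero_iff hK.measurableSet]
  exact h1

lemma ae_bounds (hc : HasCompactSupp μ) : ∀ᵐ l ∂μ, aInf μ ≤ l ∧ l ≤ bSup μ := by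
  obtain ⟨K, hK, hsub⟩ := msupp_subset hc
  filter_upwards [msupp_ae μ] with l hl
  exact ⟨csInf_le (hK.bddBelow.mono hsub) hl, le_csSup (hK.bddAbove.mono hsub) hl⟩

lemma aInf_le_bSup (hc : HasCompactSupp μ) : aInf μ ≤ bSup μ := by
  obtain ⟨l, h⟩ := (ae_bounds hc).exists
  exact h.1.trans h.2

lemma measure_Iio_pos {t : ℝ} (ht : aInf μ < t) : 0 < μ (Iio t) := by
  obtain ⟨l, hl⟩ := (msupp_ae μ).exists
  obtain ⟨x, hx, hxt⟩ := exists_lt_of_csInf_lt ⟨l, hl⟩ ht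
  exact pos_iff_ne_zero.2 (hx _ (Iio_mem_nhds hxt))

lemma integrable_ker (hc : HasCompactSupp μ) {z : ℝ} (hz : z < aInf μ) (n : ℕ) :
    Integrable (fun l => ((l - z)⁻¹) ^ n) μ := by
  refine Integrable.of_bound (by fun_prop) (((aInf μ - z)⁻¹) ^ n) ?_
  filter_upwards [ae_bounds hc] with l hl
  have h0 : 0 < aInf μ - z := by linarith
  have h1 : 0 < l - z := by linarith [hl.1]
  rw [Real.norm_of_nonneg (by positivity)]
  gcongr
  exact hl.1

lemma mom_pos (hc : HasCompactSupp μ) {z : ℝ} (hz : z < aInf μ) (n : ℕ) : 0 < mom μ n z := by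
  have h0 : 0 < (bSup μ - z)⁻¹ := by
    have := aInf_le_bSup hc
    exact inv_pos.2 (by linarith)
  have : ∫ _, ((bSup μ - z)⁻¹) ^ (n + 1) ∂μ ≤ mom μ n z := by
    refine integral_mono_ae (integrable_const _) (integrable_ker hc hz _) ?_
    filter_upwards [ae_bounds hc] with l hl
    have h1 : 0 < l - z := by linarith [hl.1]
    gcongr
    exact hl.2
  simp only [integral_const, probReal_univ, one_smul] at this
  exact lt_of_lt_of_le (by positivity) this

lemma mom_le (hc : HasCompactSupp μ) {z : ℝ} (hz : z < aInf μ) (n : ℕ) :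
    mom μ n z ≤ ((aInf μ - z)⁻¹) ^ (n + 1) := by
  have : mom μ n z ≤ ∫ _, ((aInf μ - z)⁻¹) ^ (n + 1) ∂μ := by
    refine integral_mono_ae (integrable_ker hc hz _) (integrable_const _) ?_
    filter_upwards [ae_bounds hc] with l hl
    have h0 : 0 < aInf μ - z := by linarith
    have h1 : 0 < l - z := by linarith [hl.1]
    gcongr
    exact hl.1
  simpa using this

lemma Gst_pos (hc : HasCompactSupp μ) {z : ℝ} (hz : z < aInf μ) : 0 < Gst μ z := by
  rw [← mom_zero]; exact mom_pos hc hz 0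

lemma Gst_le (hc : HasCompactSupp μ) {z : ℝ} (hz : z < aInf μ) :
    Gst μ z ≤ (aInf μ - z)⁻¹ := by
  simpa [mom_zero] using mom_le hc hz 0

lemma le_Gst (hc : HasCompactSupp μ) {z : ℝ} (hz : z < aInf μ) :
    (bSup μ - z)⁻¹ ≤ Gst μ z := by
  have : ∫ _, (bSup μ - z)⁻¹ ∂μ ≤ Gst μ z := by
    refine integral_mono_ae (integrable_const _) (by simpa using integrable_ker hc hz 1) ?_
    filter_upwards [ae_bounds hc] with l hl
    have h1 : 0 < l - z := by linarith [hl.1]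
    gcongr
    exact hl.2
  simpa using this

lemma hasDerivAt_mom (hc : HasCompactSupp μ) {z : ℝ} (hz : z < aInf μ) (n : ℕ) :
    HasDerivAt (mom μ n) ((n + 1) * mom μ (n + 1) z) z := by
  obtain ⟨c, hzc, hca⟩ := exists_between hz
  have key := hasDerivAt_integral_of_dominated_loc_of_deriv_le (μ := μ)
    (F := fun z l => ((l - z)⁻¹) ^ (n + 1)) (F' := fun z l => (n + 1) * ((l - z)⁻¹) ^ (n + 2))
    (bound := fun _ => (n + 1) * ((aInf μ - c)⁻¹) ^ (n + 2)) (x₀ := z) (s := Iio c)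
    (Iio_mem_nhds hzc) (Eventually.of_forall fun x => by fun_prop) (integrable_ker hc hz _)
    (by fun_prop) ?_ (integrable_const _) ?_
  · have h2 := key.2
    rw [integral_const_mul] at h2
    exact h2
  · filter_upwards [ae_bounds hc] with l hl x hx
    have hx' : x < c := hx
    have h0 : 0 < aInf μ - c := by linarith
    have h1 : 0 < l - x := by linarith [hl.1]
    rw [Real.norm_of_nonneg (by positivity)]
    gcongr
    linarith [hl.1]
  · filter_upwards [ae_bounds hc] with l hl x hx
    have hx' : x < c := hx
    have h1 : l - x ≠ 0 := by linarith [hl.1]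
    have h3 : HasDerivAt (fun x : ℝ => l - x) (-1) x := by
      simpa using (hasDerivAt_id x).const_sub l
    refine ((h3.inv h1).pow (n + 1)).congr_deriv ?_
    push_cast
    simp only [Pi.inv_apply]
    rw [neg_neg, one_div, ← inv_pow, mul_assoc, ← pow_add]

lemma hasDerivAt_Gst (hc : HasCompactSupp μ) {z : ℝ} (hz : z < aInf μ) :
    HasDerivAt (Gst μ) (mom μ 1 z) z := by
  have h := hasDerivAt_mom hc hz 0
  have e : mom μ 0 = Gst μ := funext mom_zero
  rw [e] at h
  simpa using h

/-- Cauchy–Schwarz: the Taylor coefficients of `G_μ` form a log-convex sequence. -/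
lemma mom_sq_le (hc : HasCompactSupp μ) {z : ℝ} (hz : z < aInf μ) (n : ℕ) :
    mom μ (n + 1) z ^ 2 ≤ mom μ n z * mom μ (n + 2) z := by
  have hp := mom_pos hc hz n
  set c := mom μ (n + 1) z / mom μ n z with hcdef
  have h0 : 0 ≤ ∫ l, ((l - z)⁻¹) ^ (n + 1) * ((l - z)⁻¹ - c) ^ 2 ∂μ := by
    refine integral_nonneg_of_ae ?_
    filter_upwards [ae_bounds hc] with l hl
    have h1 : 0 < l - z := by linarith [hl.1]
    simp only [Pi.zero_apply]
    positivity
  have h1 : ∫ l, ((l - z)⁻¹) ^ (n + 1) * ((l - z)⁻¹ - c) ^ 2 ∂μ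
      = mom μ (n + 2) z - 2 * c * mom μ (n + 1) z + c ^ 2 * mom μ n z := by
    have e : ∀ l : ℝ, ((l - z)⁻¹) ^ (n + 1) * ((l - z)⁻¹ - c) ^ 2
        = ((l - z)⁻¹) ^ (n + 2 + 1) - 2 * c * ((l - z)⁻¹) ^ (n + 1 + 1)
          + c ^ 2 * ((l - z)⁻¹) ^ (n + 1) := fun l => by ring
    simp_rw [e]
    rw [integral_add, integral_sub, integral_const_mul, integral_const_mul]
    · rfl
    · exact integrable_ker hc hz _
    · exact (integrable_ker hc hz _).const_mul _
    · exact (integrable_ker hc hz _).sub ((integrable_ker hc hz _).const_mul _)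
    · exact (integrable_ker hc hz _).const_mul _
  rw [h1, hcdef] at h0
  field_simp at h0
  nlinarith

lemma Gst_sq_le (hc : HasCompactSupp μ) {z : ℝ} (hz : z < aInf μ) :
    Gst μ z ^ 2 ≤ mom μ 1 z := by
  have h0 : 0 ≤ ∫ l, ((l - z)⁻¹ - Gst μ z) ^ 2 ∂μ := integral_nonneg fun l => sq_nonneg _
  have h1 : ∫ l, ((l - z)⁻¹ - Gst μ z) ^ 2 ∂μ = mom μ 1 z - Gst μ z ^ 2 := by
    have e : ∀ l : ℝ, ((l - z)⁻¹ - Gst μ z) ^ 2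
        = ((l - z)⁻¹) ^ (1 + 1) - 2 * Gst μ z * ((l - z)⁻¹) ^ (0 + 1) + Gst μ z ^ 2 :=
      fun l => by ring
    simp_rw [e]
    rw [integral_add, integral_sub, integral_const_mul]
    · change mom μ 1 z - 2 * Gst μ z * mom μ 0 z + _ = _
      rw [mom_zero]
      simp
      ring
    · exact integrable_ker hc hz _
    · exact (integrable_ker hc hz _).const_mul _
    · exact (integrable_ker hc hz _).sub ((integrable_ker hc hz _).const_mul _)
    · exact integrable_const _
  linarith

/-- Ratios of consecutive terms of a log-convex sequence increase. -/
lemma mom_ratio (hc : HasCompactSupp μ) {z : ℝ} (hz : z < aInf μ) {j n : ℕ} (hjn : j ≤ n) :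
    mom μ (j + 1) z * mom μ n z ≤ mom μ (n + 1) z * mom μ j z := by
  induction n, hjn using Nat.le_induction with
  | base => exact le_of_eq rfl
  | succ n _ ih =>
    have h := mom_sq_le hc hz n
    have p1 := mom_pos hc hz n
    have p2 := mom_pos hc hz (n + 1)
    have p3 := mom_pos hc hz j
    have : mom μ n z * (mom μ (j + 1) z * mom μ (n + 1) z)
        ≤ mom μ n z * (mom μ (n + 1 + 1) z * mom μ j z) := by
      nlinarith [mul_le_mul_of_nonneg_right ih p2.le, mul_le_mul_of_nonneg_right h p3.le]
    exact le_of_mul_le_mul_left this p1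

lemma strictMonoOn_Gst (hc : HasCompactSupp μ) : StrictMonoOn (Gst μ) (Iio (aInf μ)) := by
  refine strictMonoOn_of_deriv_pos (convex_Iio _)
    (fun z hz => (hasDerivAt_Gst hc hz).continuousAt.continuousWithinAt) fun z hz => ?_
  rw [interior_Iio] at hz
  rw [(hasDerivAt_Gst hc hz).deriv]
  exact mom_pos hc hz 1

lemma Gst_nonpos_of_gt (hc : HasCompactSupp μ) {z : ℝ} (hz : bSup μ < z) : Gst μ z ≤ 0 := by
  refine integral_nonpos_of_ae ?_
  filter_upwards [ae_bounds hc] with l hl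
  exact inv_nonpos.2 (by linarith [hl.2])

lemma Ginv_Gst (hc : HasCompactSupp μ) {z : ℝ} (hz : z < aInf μ) : Ginv μ (Gst μ z) = z := by
  have hex : ∃ w ∈ Iio (aInf μ) ∪ Ioi (bSup μ), Gst μ w = Gst μ z := ⟨z, Or.inl hz, rfl⟩
  have hm := Function.invFunOn_mem hex
  have he := Function.invFunOn_eq hex
  change Function.invFunOn (Gst μ) _ _ = z
  set w := Function.invFunOn (Gst μ) (Iio (aInf μ) ∪ Ioi (bSup μ)) (Gst μ z)
  rcases hm with h | h
  · exact (strictMonoOn_Gst hc).injOn h hz he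
  · have := Gst_nonpos_of_gt hc h
    have := Gst_pos hc hz
    linarith

/-- The values of `G_μ` to the left of the support form an initial segment of `(0, ∞)`. -/
lemma exists_Gst_eq (hc : HasCompactSupp μ) {g z : ℝ} (hg : 0 < g) (hz : z < aInf μ)
    (hgz : g ≤ Gst μ z) : ∃ w ≤ z, Gst μ w = g := by
  set y := min z (aInf μ - g⁻¹) with hy
  have hyz : y ≤ z := min_le_left _ _
  have hya : y < aInf μ := hyz.trans_lt hz
  have h1 : Gst μ y ≤ g := by
    refine (Gst_le hc hya).trans ?_
    rw [inv_le_comm₀ (by linarith) hg]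
    linarith [min_le_right z (aInf μ - g⁻¹)]
  have hcont : ContinuousOn (Gst μ) (Icc y z) := fun x hx =>
    (hasDerivAt_Gst hc (hx.2.trans_lt hz)).continuousAt.continuousWithinAt
  obtain ⟨w, hw, e⟩ := intermediate_value_Icc hyz hcont ⟨h1, hgz⟩
  exact ⟨w, hw.2, e⟩

lemma analyticAt_Gst (hc : HasCompactSupp μ) {z : ℝ} (hz : z < aInf μ) :
    AnalyticAt ℝ (Gst μ) z := by
  set d := (aInf μ - z) / 2 with hd
  have hd0 : 0 < d := by rw [hd]; linarith
  have hsum : Summable fun n : ℕ => mom μ n z * d ^ n := by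
    refine Summable.of_nonneg_of_le (f := fun n : ℕ => (2 * d)⁻¹ * (1 / 2 : ℝ) ^ n)
      (fun n => mul_nonneg (mom_pos hc hz n).le (by positivity)) (fun n => ?_)
      ((summable_geometric_of_lt_one (by norm_num) (by norm_num)).mul_left _)
    have h := mom_le hc hz n
    have e : aInf μ - z = 2 * d := by rw [hd]; ring
    rw [e] at h
    calc mom μ n z * d ^ n ≤ ((2 * d)⁻¹) ^ (n + 1) * d ^ n := by gcongr
      _ = (2 * d)⁻¹ * (1 / 2 : ℝ) ^ n := by
        rw [pow_succ, mul_right_comm, ← mul_pow, mul_comm]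
        congr 2
        field_simp
  have hp : HasFPowerSeriesOnBall (Gst μ)
      (FormalMultilinearSeries.ofScalars ℝ (fun n => mom μ n z)) z (Real.toNNReal d) := by
    refine ⟨?_, by simpa using hd0, ?_⟩
    · refine FormalMultilinearSeries.le_radius_of_summable_norm _ ?_
      refine hsum.congr fun n => ?_
      rw [FormalMultilinearSeries.ofScalars_norm, Real.norm_of_nonneg (mom_pos hc hz n).le,
        Real.coe_toNNReal _ hd0.le]
    · intro y hy
      have hyd : |y| < d := by
        rw [Metric.eball_coe, Metric.mem_ball, Real.coe_toNNReal _ hd0.le] at hy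
        simpa using hy
      have h1 := hasSum_integral_of_summable_integral_norm (μ := μ)
        (F := fun (n : ℕ) (l : ℝ) => ((l - z)⁻¹) ^ (n + 1) * y ^ n)
        (fun n => (integrable_ker hc hz _).mul_const _) ?_
      · have e1 : ∀ n : ℕ, (∫ l, ((l - z)⁻¹) ^ (n + 1) * y ^ n ∂μ) = mom μ n z * y ^ n :=
          fun n => integral_mul_const _ _
        have e2 : (∫ l, ∑' n : ℕ, ((l - z)⁻¹) ^ (n + 1) * y ^ n ∂μ) = Gst μ (z + y) := by
          refine integral_congr_ae ?_
          filter_upwards [ae_bounds hc] with l hl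
          have h2 : 2 * d ≤ l - z := by rw [hd]; linarith [hl.1]
          have h3 : |(l - z)⁻¹ * y| < 1 := by
            rw [abs_mul, abs_inv, abs_of_pos (by linarith : 0 < l - z), inv_mul_lt_iff₀ (by linarith)]
            linarith
          have h4 := tsum_geometric_of_abs_lt_one h3
          have h5 : ∀ n : ℕ, ((l - z)⁻¹) ^ (n + 1) * y ^ n = (l - z)⁻¹ * ((l - z)⁻¹ * y) ^ n :=
            fun n => by ring
          simp_rw [h5]
          rw [tsum_mul_left, h4, ← mul_inv]
          congr 1
          have : l - z ≠ 0 := by linarith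
          field_simp
          ring
        simp_rw [e1] at h1
        rw [e2] at h1
        convert h1 using 2 with n
        rw [FormalMultilinearSeries.ofScalars_apply_eq, smul_eq_mul]
      · refine Summable.of_nonneg_of_le (fun n => integral_nonneg fun _ => norm_nonneg _)
          (fun n => ?_) hsum
        have : ∫ l, ‖((l - z)⁻¹) ^ (n + 1) * y ^ n‖ ∂μ = mom μ n z * |y| ^ n := by
          rw [mom, ← integral_mul_const]
          refine integral_congr_ae ?_
          filter_upwards [ae_bounds hc] with l hl
          have h1 : 0 < l - z := by linarith [hl.1]
          rw [norm_mul, Real.norm_of_nonneg (by positivity), norm_pow, Real.norm_eq_abs]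
        rw [this]
        gcongr
        exact (mom_pos hc hz n).le
  exact hp.analyticAt

lemma analyticAt_Ginv (hc : HasCompactSupp μ) {z : ℝ} (hz : z < aInf μ) :
    AnalyticAt ℝ (Ginv μ) (Gst μ z) := by
  have hne : deriv (Gst μ) z ≠ 0 := by
    rw [(hasDerivAt_Gst hc hz).deriv]; exact (mom_pos hc hz 1).ne'
  rw [← analyticAt_comp_iff_of_deriv_ne_zero (analyticAt_Gst hc hz) hne]
  refine analyticAt_id.congr ?_
  filter_upwards [Iio_mem_nhds hz] with w hw
  exact (Ginv_Gst hc hw).symm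

lemma hasDerivAt_Ginv (hc : HasCompactSupp μ) {z : ℝ} (hz : z < aInf μ) :
    HasDerivAt (Ginv μ) (mom μ 1 z)⁻¹ (Gst μ z) := by
  have hK := (analyticAt_Ginv hc hz).differentiableAt.hasDerivAt
  have h1 := hK.comp z (hasDerivAt_Gst hc hz)
  have h2 : HasDerivAt (Ginv μ ∘ Gst μ) 1 z := by
    refine (hasDerivAt_id z).congr_of_eventuallyEq ?_
    filter_upwards [Iio_mem_nhds hz] with w hw
    exact Ginv_Gst hc hw
  have h3 := h1.unique h2
  rwa [eq_inv_of_mul_eq_one_left h3] at hK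

end basics

/-! ### Kaluza's theorem -/

/-- **Kaluza's theorem.** If `m` is a positive log-convex sequence and the power series with
coefficients `f` and `m` have constant product, with `f 0 ≤ 0`, then `f n ≥ 0` for `n ≥ 1`. -/
lemma kaluza {f m : ℕ → ℝ} (hm : ∀ n, 0 < m n)
    (hr : ∀ j n, j ≤ n → m (j + 1) * m n ≤ m (n + 1) * m j)
    (hf : ∀ n, 1 ≤ n → ∑ i ∈ Finset.range (n + 1), f i * m (n - i) = 0) (h0 : f 0 ≤ 0) :
    ∀ n, 1 ≤ n → 0 ≤ f n := by
  intro n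
  induction n using Nat.strong_induction_on with
  | _ n ih =>
    intro hn
    obtain ⟨N, rfl⟩ : ∃ N, n = N + 1 := ⟨n - 1, by omega⟩
    have e1 := hf (N + 1) hn
    rw [Finset.sum_range_succ] at e1
    simp only [tsub_self] at e1
    rcases Nat.eq_zero_or_pos N with rfl | hN
    · simp only [zero_add, Finset.range_one, Finset.sum_singleton, tsub_zero] at e1
      have h1 := mul_nonneg_of_nonpos_of_nonpos h0 (neg_nonpos.2 (hm 1).le)
      exact nonneg_of_mul_nonneg_left (by simp only [zero_add]; linarith) (hm 0)
    · have e2 := hf N hN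
      -- Combine the relations of orders `N` and `N + 1` so that the `i = 0` term cancels; the
      -- remaining coefficients are nonnegative by log-convexity.
      have e3 : f (N + 1) * (m N * m 0) = ∑ i ∈ Finset.range (N + 1),
          f i * (m (N + 1) * m (N - i) - m (N + 1 - i) * m N) := by
        have : ∑ i ∈ Finset.range (N + 1), f i * (m (N + 1) * m (N - i) - m (N + 1 - i) * m N)
            = m (N + 1) * ∑ i ∈ Finset.range (N + 1), f i * m (N - i)
              - m N * ∑ i ∈ Finset.range (N + 1), f i * m (N + 1 - i) := by
          rw [Finset.mul_sum, Finset.mul_sum, ← Finset.sum_sub_distrib]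
          exact Finset.sum_congr rfl fun i _ => by ring
        rw [this, e2]
        linear_combination m N * e1
      have h1 : 0 ≤ f (N + 1) * (m N * m 0) := by
        rw [e3]
        refine Finset.sum_nonneg fun i hi => ?_
        have hi' : i ≤ N := Nat.lt_succ_iff.1 (Finset.mem_range.1 hi)
        rcases Nat.eq_zero_or_pos i with rfl | hi0
        · simp
        · refine mul_nonneg (ih i (by omega) hi0) (sub_nonneg.2 ?_)
          have := hr (N - i) N (by omega)
          rwa [show N - i + 1 = N + 1 - i by omega] at this
      exact nonneg_of_mul_nonneg_left h1 (mul_pos (hm N) (hm 0))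

/-! ### Absolutely monotone functions -/

/-- `AM n J f`: on `J`, the function `f` is `n` times differentiable and all its derivatives of
order at most `n` are nonnegative. -/
def AM : ℕ → Set ℝ → (ℝ → ℝ) → Prop
  | 0, J, f => ∀ x ∈ J, 0 ≤ f x
  | n + 1, J, f => (∀ x ∈ J, 0 ≤ f x) ∧
      ∃ f' : ℝ → ℝ, (∀ x ∈ J, HasDerivAt f (f' x) x) ∧ AM n J f'

namespace AM

variable {J I : Set ℝ} {f g : ℝ → ℝ}

lemma nonneg {n : ℕ} (h : AM n J f) : ∀ x ∈ J, 0 ≤ f x := by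
  cases n with
  | zero => exact h
  | succ n => exact h.1

lemma of_succ {n : ℕ} (h : AM (n + 1) J f) : AM n J f := by
  induction n generalizing f with
  | zero => exact h.1
  | succ n ih =>
    obtain ⟨h0, f', hd, h'⟩ := h
    exact ⟨h0, f', hd, ih h'⟩

lemma congr {n : ℕ} (hJ : IsOpen J) (h : AM n J f) (hfg : EqOn f g J) : AM n J g := by
  cases n with
  | zero => exact fun x hx => hfg hx ▸ h x hx
  | succ n =>
    obtain ⟨h0, f', hd, h'⟩ := h
    refine ⟨fun x hx => hfg hx ▸ h0 x hx, f', fun x hx => ?_, h'⟩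
    refine (hd x hx).congr_of_eventuallyEq ?_
    filter_upwards [hJ.mem_nhds hx] with y hy
    exact (hfg hy).symm

lemma deriv_of {n : ℕ} (hJ : IsOpen J) (h : AM (n + 1) J f)
    (hg : ∀ x ∈ J, HasDerivAt f (g x) x) : AM n J g := by
  obtain ⟨_, f', hd, h'⟩ := h
  exact h'.congr hJ fun x hx => (hd x hx).unique (hg x hx)

lemma const (n : ℕ) {c : ℝ} (hc : 0 ≤ c) : AM n J (fun _ => c) := by
  induction n generalizing c with
  | zero => exact fun _ _ => hc
  | succ n ih => exact ⟨fun _ _ => hc, fun _ => 0, fun x _ => hasDerivAt_const x c, ih le_rfl⟩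

lemma add {n : ℕ} (hf : AM n J f) (hg : AM n J g) : AM n J (fun x => f x + g x) := by
  induction n generalizing f g with
  | zero => exact fun x hx => add_nonneg (hf x hx) (hg x hx)
  | succ n ih =>
    obtain ⟨h0, f', hd, h'⟩ := hf
    obtain ⟨k0, g', kd, k'⟩ := hg
    exact ⟨fun x hx => add_nonneg (h0 x hx) (k0 x hx), fun x => f' x + g' x,
      fun x hx => (hd x hx).add (kd x hx), ih h' k'⟩

lemma mul {n : ℕ} (hf : AM n J f) (hg : AM n J g) : AM n J (fun x => f x * g x) := by
  induction n generalizing f g with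
  | zero => exact fun x hx => mul_nonneg (hf x hx) (hg x hx)
  | succ n ih =>
    have hf1 := hf.of_succ
    have hg1 := hg.of_succ
    obtain ⟨h0, f', hd, h'⟩ := hf
    obtain ⟨k0, g', kd, k'⟩ := hg
    exact ⟨fun x hx => mul_nonneg (h0 x hx) (k0 x hx), fun x => f' x * g x + f x * g' x,
      fun x hx => (hd x hx).mul (kd x hx), (ih h' hg1).add (ih hf1 k')⟩

/-- Chain rule: only the derivative of the inner function has to be absolutely monotone, and one
order less of it suffices. -/
lemma comp {n : ℕ} {h w w' : ℝ → ℝ} (hh : AM (n + 1) I h) (hw : MapsTo w J I)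
    (hd : ∀ x ∈ J, HasDerivAt w (w' x) x) (hw' : AM n J w') : AM (n + 1) J (fun x => h (w x)) := by
  induction n generalizing h with
  | zero =>
    obtain ⟨h0, h', hhd, hh'⟩ := hh
    exact ⟨fun x hx => h0 _ (hw hx), fun x => h' (w x) * w' x,
      fun x hx => (hhd _ (hw hx)).comp x (hd x hx),
      fun x hx => mul_nonneg (hh' _ (hw hx)) (hw' x hx)⟩
  | succ n ih =>
    obtain ⟨h0, h', hhd, hh'⟩ := hh
    exact ⟨fun x hx => h0 _ (hw hx), fun x => h' (w x) * w' x,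
      fun x hx => (hhd _ (hw hx)).comp x (hd x hx), (ih hh' hw'.of_succ).mul hw'⟩

lemma inv_one_sub {n : ℕ} (hf : AM n J f) (h1 : ∀ x ∈ J, f x < 1) :
    AM n J (fun x => (1 - f x)⁻¹) := by
  have hnn : ∀ x ∈ J, 0 ≤ (1 - f x)⁻¹ := fun x hx => inv_nonneg.2 (by linarith [h1 x hx])
  induction n generalizing f with
  | zero => exact hnn
  | succ n ih =>
    have hi := ih hf.of_succ h1 hnn
    obtain ⟨h0, f', hd, h'⟩ := hf
    refine ⟨hnn, fun x => f' x * ((1 - f x)⁻¹ * (1 - f x)⁻¹), fun x hx => ?_, h'.mul (hi.mul hi)⟩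
    have hne : 1 - f x ≠ 0 := by linarith [h1 x hx]
    refine (((hd x hx).const_sub 1).inv hne).congr_deriv ?_
    field_simp

end AM

/-! ### The reciprocal of the Stieltjes transform -/

section reciprocal

variable {μ : Measure ℝ} [IsProbabilityMeasure μ]

/-- The negative reciprocal `F_μ = -1 / G_μ` of the Stieltjes transform. -/
noncomputable def Frec (μ : Measure ℝ) (z : ℝ) : ℝ := -(Gst μ z)⁻¹

lemma analyticAt_Frec (hc : HasCompactSupp μ) {z : ℝ} (hz : z < aInf μ) :
    AnalyticAt ℝ (Frec μ) z :=
  ((analyticAt_Gst hc hz).inv (Gst_pos hc hz).ne').neg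

lemma iteratedDeriv_Gst (hc : HasCompactSupp μ) (n : ℕ) {z : ℝ} (hz : z < aInf μ) :
    iteratedDeriv n (Gst μ) z = n.factorial * mom μ n z := by
  induction n generalizing z with
  | zero => simp [mom_zero]
  | succ n ih =>
    rw [iteratedDeriv_succ]
    have he : iteratedDeriv n (Gst μ) =ᶠ[𝓝 z] fun y => n.factorial * mom μ n y := by
      filter_upwards [Iio_mem_nhds hz] with y hy
      exact ih hy
    rw [he.deriv_eq, ((hasDerivAt_mom hc hz n).const_mul _).deriv, Nat.factorial_succ]
    push_cast
    ring

lemma iteratedDeriv_Frec_nonneg (hc : HasCompactSupp μ) {z : ℝ} (hz : z < aInf μ) :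
    ∀ n : ℕ, 1 ≤ n → 0 ≤ iteratedDeriv n (Frec μ) z := by
  have key := kaluza (f := fun n => iteratedDeriv n (Frec μ) z / n.factorial)
    (m := fun n => mom μ n z) (mom_pos hc hz) (fun j n h => mom_ratio hc hz h) ?_ ?_
  · intro n hn
    have h := key n hn
    have hp : (0 : ℝ) < n.factorial := by positivity
    simpa [div_mul_cancel₀ _ hp.ne'] using mul_nonneg h hp.le
  · intro n hn
    have hL := iteratedDeriv_mul (n := n) (analyticAt_Frec hc hz).contDiffAt
      (analyticAt_Gst hc hz).contDiffAt
    have h0 : iteratedDeriv n (Frec μ * Gst μ) z = 0 := by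
      have he : Frec μ * Gst μ =ᶠ[𝓝 z] fun _ => (-1 : ℝ) := by
        filter_upwards [Iio_mem_nhds hz] with y hy
        have := (Gst_pos hc hy).ne'
        simp [Frec, this]
      rw [he.iteratedDeriv_eq n, iteratedDeriv_const]
      simp [show n ≠ 0 by omega]
    rw [h0] at hL
    have hp : (n.factorial : ℝ) ≠ 0 := by positivity
    refine mul_left_cancel₀ hp ?_
    rw [mul_zero, hL, Finset.mul_sum]
    refine Finset.sum_congr rfl fun i hi => ?_
    have hi' : i ≤ n := Nat.lt_succ_iff.1 (Finset.mem_range.1 hi)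
    rw [iteratedDeriv_Gst hc _ hz, ← Nat.choose_mul_factorial_mul_factorial hi']
    push_cast
    field_simp
  · simpa [Frec] using (Gst_pos hc hz).le

lemma hasDerivAt_iteratedDeriv_Frec (hc : HasCompactSupp μ) {z : ℝ} (hz : z < aInf μ) (n : ℕ) :
    HasDerivAt (iteratedDeriv n (Frec μ)) (iteratedDeriv (n + 1) (Frec μ) z) z := by
  rw [iteratedDeriv_succ]
  have h : AnalyticAt ℝ (iteratedDeriv n (Frec μ)) z := by
    rw [iteratedDeriv_eq_iterate]
    exact (analyticAt_Frec hc hz).iterated_deriv n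
  exact h.differentiableAt.hasDerivAt

/-- `k_μ = F_μ' - 1`. -/
noncomputable def kap (μ : Measure ℝ) (z : ℝ) : ℝ := deriv (Frec μ) z - 1

lemma hasDerivAt_Frec (hc : HasCompactSupp μ) {z : ℝ} (hz : z < aInf μ) :
    HasDerivAt (Frec μ) (kap μ z + 1) z := by
  simpa [kap] using (analyticAt_Frec hc hz).differentiableAt.hasDerivAt

lemma AM_kap (hc : HasCompactSupp μ) (n : ℕ) : AM n (Iio (aInf μ)) (kap μ) := by
  have h1 : ∀ n j : ℕ, 1 ≤ j → AM n (Iio (aInf μ)) (iteratedDeriv j (Frec μ)) := by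
    intro n
    induction n with
    | zero => exact fun j hj x hx => iteratedDeriv_Frec_nonneg hc hx j hj
    | succ n ih =>
      exact fun j hj => ⟨fun x hx => iteratedDeriv_Frec_nonneg hc hx j hj, _,
        fun x hx => hasDerivAt_iteratedDeriv_Frec hc hx j, ih (j + 1) (by omega)⟩
  have h0 : ∀ x ∈ Iio (aInf μ), 0 ≤ kap μ x := by
    intro x hx
    have hG := Gst_pos hc hx
    have hd : HasDerivAt (Frec μ) (mom μ 1 x / Gst μ x ^ 2) x := by
      refine ((hasDerivAt_Gst hc hx).inv hG.ne').neg.congr_deriv ?_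
      ring
    rw [kap, hd.deriv, sub_nonneg, le_div_iff₀ (by positivity), one_mul]
    exact Gst_sq_le hc hx
  cases n with
  | zero => exact h0
  | succ n =>
    refine ⟨h0, iteratedDeriv 2 (Frec μ), fun x hx => ?_, h1 n 2 (by norm_num)⟩
    have := hasDerivAt_iteratedDeriv_Frec hc hx 1
    rw [iteratedDeriv_one] at this
    exact this.sub_const 1

lemma AM_mom (hc : HasCompactSupp μ) (n j : ℕ) : AM n (Iio (aInf μ)) (mom μ j) := by
  induction n generalizing j with
  | zero => exact fun x hx => (mom_pos hc hx j).le
  | succ n ih =>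
    exact ⟨fun x hx => (mom_pos hc hx j).le, _, fun x hx => hasDerivAt_mom hc hx j,
      (AM.const n (by positivity)).mul (ih (j + 1))⟩

end reciprocal


/-! ### Subordination functions -/

section subordination

variable {μ ν ρ : Measure ℝ} [IsProbabilityMeasure μ] [IsProbabilityMeasure ν]
  [IsProbabilityMeasure ρ]

/-- `Subord μ ν ρ J w v`: on the set `J`, the functions `w` and `v` satisfy the subordination
equations `G_μ(w(z)) = G_ν(v(z)) = G_ρ(z)` and `w(z) + v(z) = z - 1 / G_ρ(z)`, all the points lying
to the left of the respective supports. -/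
structure Subord (μ ν ρ : Measure ℝ) (J : Set ℝ) (w v : ℝ → ℝ) : Prop where
  left : ∀ z ∈ J, z < aInf ρ
  w_lt : ∀ z ∈ J, w z < aInf μ
  v_lt : ∀ z ∈ J, v z < aInf ν
  w_eq : ∀ z ∈ J, Gst μ (w z) = Gst ρ z
  v_eq : ∀ z ∈ J, Gst ν (v z) = Gst ρ z
  add_eq : ∀ z ∈ J, w z + v z = z - (Gst ρ z)⁻¹

namespace Subord

variable {J : Set ℝ} {w v : ℝ → ℝ}

lemma symm (h : Subord μ ν ρ J w v) : Subord ν μ ρ J v w :=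
  ⟨h.left, h.v_lt, h.w_lt, h.v_eq, h.w_eq, fun z hz => by rw [add_comm, h.add_eq z hz]⟩

lemma exists_deriv (hμ : HasCompactSupp μ) (hρ : HasCompactSupp ρ) (hJ : IsOpen J)
    (h : Subord μ ν ρ J w v) :
    ∃ W : ℝ → ℝ, (∀ z ∈ J, HasDerivAt w (W z) z) ∧ ∀ z ∈ J, 0 < W z := by
  refine ⟨fun z => (mom μ 1 (w z))⁻¹ * mom ρ 1 z, fun z hz => ?_, fun z hz =>
    mul_pos (inv_pos.2 (mom_pos hμ (h.w_lt z hz) 1)) (mom_pos hρ (h.left z hz) 1)⟩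
  have h1 := hasDerivAt_Ginv hμ (h.w_lt z hz)
  rw [h.w_eq z hz] at h1
  refine (h1.comp z (hasDerivAt_Gst hρ (h.left z hz))).congr_of_eventuallyEq ?_
  filter_upwards [hJ.mem_nhds hz] with y hy
  rw [Function.comp_apply, ← h.w_eq y hy, Ginv_Gst hμ (h.w_lt y hy)]

/-- Differentiating `w + v = id + F_μ ∘ w`. -/
lemma deriv_eq (hμ : HasCompactSupp μ) (hJ : IsOpen J)
    (h : Subord μ ν ρ J w v) {W V : ℝ → ℝ} (hW : ∀ z ∈ J, HasDerivAt w (W z) z)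
    (hV : ∀ z ∈ J, HasDerivAt v (V z) z) {z : ℝ} (hz : z ∈ J) :
    V z = 1 + kap μ (w z) * W z := by
  have h1 := (hasDerivAt_id z).add ((hasDerivAt_Frec hμ (h.w_lt z hz)).comp z (hW z hz))
  have h2 := (hW z hz).add (hV z hz)
  have h3 : w + v =ᶠ[𝓝 z] id + Frec μ ∘ w := by
    filter_upwards [hJ.mem_nhds hz] with y hy
    simp only [Pi.add_apply, id, Function.comp_apply, Frec]
    rw [h.add_eq y hy, h.w_eq y hy]
    ring
  have h4 := (h1.congr_of_eventuallyEq h3).unique h2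
  linarith

/-- The derivatives of the subordination functions are absolutely monotone: with `P = k_μ ∘ w` and
`Q = k_ν ∘ v` they are `(1 + Q) / (1 - P Q)` and `(1 + P) / (1 - P Q)`, so that regularity
bootstraps. -/
lemma AM_deriv (hμ : HasCompactSupp μ) (hν : HasCompactSupp ν) (hJ : IsOpen J)
    (h : Subord μ ν ρ J w v) {W V : ℝ → ℝ} (hW : ∀ z ∈ J, HasDerivAt w (W z) z)
    (hV : ∀ z ∈ J, HasDerivAt v (V z) z) (hW0 : ∀ z ∈ J, 0 < W z) (hV0 : ∀ z ∈ J, 0 < V z)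
    (n : ℕ) : AM n J W ∧ AM n J V := by
  induction n with
  | zero => exact ⟨fun z hz => (hW0 z hz).le, fun z hz => (hV0 z hz).le⟩
  | succ n ih =>
    have hP : AM (n + 1) J fun z => kap μ (w z) :=
      (AM_kap hμ (n + 1)).comp (fun z hz => h.w_lt z hz) hW ih.1
    have hQ : AM (n + 1) J fun z => kap ν (v z) :=
      (AM_kap hν (n + 1)).comp (fun z hz => h.v_lt z hz) hV ih.2
    have e1 : ∀ z ∈ J, V z = 1 + kap μ (w z) * W z := fun z hz => h.deriv_eq hμ hJ hW hV hz
    have e2 : ∀ z ∈ J, W z = 1 + kap ν (v z) * V z := fun z hz => h.symm.deriv_eq hν hJ hV hW hz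
    have e3 : ∀ z ∈ J, V z * (1 - kap μ (w z) * kap ν (v z)) = 1 + kap μ (w z) := fun z hz => by
      linear_combination e1 z hz + kap μ (w z) * e2 z hz
    have e4 : ∀ z ∈ J, W z * (1 - kap μ (w z) * kap ν (v z)) = 1 + kap ν (v z) := fun z hz => by
      linear_combination e2 z hz + kap ν (v z) * e1 z hz
    -- `v' > 0` and `1 + k_μ(w) > 0` force the denominator to be positive.
    have hlt : ∀ z ∈ J, kap μ (w z) * kap ν (v z) < 1 := fun z hz => by
      have h1 : 0 < V z * (1 - kap μ (w z) * kap ν (v z)) := by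
        rw [e3 z hz]; linarith [hP.nonneg z hz]
      linarith [pos_of_mul_pos_right h1 (hV0 z hz).le]
    have hI := (hP.mul hQ).inv_one_sub hlt
    refine ⟨(((AM.const _ zero_le_one).add hQ).mul hI).congr hJ fun z hz => ?_,
      (((AM.const _ zero_le_one).add hP).mul hI).congr hJ fun z hz => ?_⟩
    · have := hlt z hz
      have h5 : 1 - kap μ (w z) * kap ν (v z) ≠ 0 := by linarith
      rw [← e4 z hz]
      field_simp
    · have := hlt z hz
      have h5 : 1 - kap μ (w z) * kap ν (v z) ≠ 0 := by linarith
      rw [← e3 z hz]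
      field_simp

/-- Comparison of Taylor coefficients: those of `G_ρ` at `z` dominate those of `G_μ` at `w(z)`,
and the differences are absolutely monotone. -/
lemma AM_sub (hμ : HasCompactSupp μ) (hν : HasCompactSupp ν) (hρ : HasCompactSupp ρ)
    (hJ : IsOpen J) (h : Subord μ ν ρ J w v) (n m : ℕ) :
    AM m J fun z => mom ρ n z - mom μ n (w z) := by
  obtain ⟨W, hW, hW0⟩ := h.exists_deriv hμ hρ hJ
  obtain ⟨V, hV, hV0⟩ := h.symm.exists_deriv hν hρ hJ
  have hAM := h.AM_deriv hμ hν hJ hW hV hW0 hV0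
  induction n generalizing m with
  | zero =>
    refine (AM.const m le_rfl).congr hJ fun z hz => ?_
    simp only [mom_zero]
    rw [h.w_eq z hz, sub_self]
  | succ n ih =>
    have hd : ∀ z ∈ J, HasDerivAt (fun z => mom ρ n z - mom μ n (w z))
        ((n + 1) * mom ρ (n + 1) z - (n + 1) * mom μ (n + 1) (w z) * W z) z := fun z hz =>
      (hasDerivAt_mom hρ (h.left z hz) n).sub
        ((hasDerivAt_mom hμ (h.w_lt z hz) n).comp z (hW z hz))
    have h1 := (ih (m + 1)).deriv_of hJ hd
    have hk : AM m J fun z => kap ν (v z) :=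
      ((AM_kap hν (m + 1)).comp (fun z hz => h.v_lt z hz) hV (hAM m).2).of_succ
    have hm : AM m J fun z => mom μ (n + 1) (w z) :=
      ((AM_mom hμ (m + 1) (n + 1)).comp (fun z hz => h.w_lt z hz) hW (hAM m).1).of_succ
    have hc : (0 : ℝ) ≤ ((n : ℝ) + 1)⁻¹ := by positivity
    refine (((AM.const m hc).mul h1).add (hm.mul (hk.mul (hAM m).2))).congr hJ fun z hz => ?_
    have e2 := h.symm.deriv_eq hν hJ hV hW hz
    have : (n : ℝ) + 1 ≠ 0 := by positivity
    rw [e2]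
    field_simp
    ring

/-- The subordination function keeps its distance from the support. -/
lemma dist_le (hμ : HasCompactSupp μ) (hν : HasCompactSupp ν) (hρ : HasCompactSupp ρ)
    (hJ : IsOpen J) (h : Subord μ ν ρ J w v) {z : ℝ} (hz : z ∈ J) :
    aInf ρ - z ≤ aInf μ - w z := by
  by_contra! hlt
  obtain ⟨t, ht1, ht2⟩ := exists_between hlt
  have hw := h.w_lt z hz
  have ht0 : 0 < t := by linarith
  have hp : 0 < μ.real (Iio (w z + t)) :=
    ENNReal.toReal_pos (measure_Iio_pos (by linarith)).ne' (measure_ne_top _ _)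
  have h1 : ∀ n : ℕ, (t⁻¹) ^ (n + 1) * μ.real (Iio (w z + t)) ≤ ((aInf ρ - z)⁻¹) ^ (n + 1) := by
    intro n
    have h2 : mom μ n (w z) ≤ mom ρ n z :=
      sub_nonneg.1 ((h.AM_sub hμ hν hρ hJ n 0).nonneg z hz)
    refine le_trans ?_ (h2.trans (mom_le hρ (h.left z hz) n))
    calc (t⁻¹) ^ (n + 1) * μ.real (Iio (w z + t))
        = ∫ _ in Iio (w z + t), (t⁻¹) ^ (n + 1) ∂μ := by
          rw [setIntegral_const, smul_eq_mul, mul_comm]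
      _ ≤ ∫ l in Iio (w z + t), ((l - w z)⁻¹) ^ (n + 1) ∂μ := by
          refine setIntegral_mono_on_ae integrableOn_const
            (integrable_ker hμ hw _).integrableOn measurableSet_Iio ?_
          filter_upwards [ae_bounds hμ] with l hl hlt
          have h3 : 0 < l - w z := by linarith [hl.1]
          have h4 : l < w z + t := hlt
          gcongr
          linarith
      _ ≤ mom μ n (w z) := by
          refine setIntegral_le_integral (integrable_ker hμ hw _) ?_
          filter_upwards [ae_bounds hμ] with l hl
          have h3 : 0 < l - w z := by linarith [hl.1]
          simp only [Pi.zero_apply]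
          positivity
  have hd : 0 < aInf ρ - z := by linarith
  have hr : 1 < (aInf ρ - z) / t := by rwa [one_lt_div ht0]
  obtain ⟨n, hn⟩ := ((tendsto_pow_atTop_atTop_of_one_lt hr).eventually_gt_atTop
    (μ.real (Iio (w z + t)))⁻¹).exists_forall_of_atTop
  have h5 := hn (n + 1) (by omega)
  rw [inv_lt_iff_one_lt_mul₀ hp, div_pow, div_mul_eq_mul_div, one_lt_div (by positivity)] at h5
  have h6 := h1 n
  rw [inv_pow, inv_pow, inv_mul_le_iff₀ (by positivity), ← div_eq_mul_inv,
    le_div_iff₀ (by positivity)] at h6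
  linarith

end Subord

/-- At the point `z`, the subordination equations have a solution to the left of the supports. -/
def Solvable (μ ν ρ : Measure ℝ) (z : ℝ) : Prop :=
  z < aInf ρ ∧ ∃ w v, w < aInf μ ∧ v < aInf ν ∧ Gst μ w = Gst ρ z ∧ Gst ν v = Gst ρ z ∧
    w + v = z - (Gst ρ z)⁻¹

lemma Subord.of_solvable (hμ : HasCompactSupp μ) (hν : HasCompactSupp ν) {J : Set ℝ}
    (h : ∀ z ∈ J, Solvable μ ν ρ z) :
    Subord μ ν ρ J (fun z => Ginv μ (Gst ρ z)) (fun z => Ginv ν (Gst ρ z)) := by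
  have key : ∀ z ∈ J, z < aInf ρ ∧ Ginv μ (Gst ρ z) < aInf μ ∧ Ginv ν (Gst ρ z) < aInf ν ∧
      Gst μ (Ginv μ (Gst ρ z)) = Gst ρ z ∧ Gst ν (Ginv ν (Gst ρ z)) = Gst ρ z ∧
      Ginv μ (Gst ρ z) + Ginv ν (Gst ρ z) = z - (Gst ρ z)⁻¹ := by
    intro z hz
    obtain ⟨h1, w, v, hw, hv, ew, ev, e⟩ := h z hz
    have e1 : Ginv μ (Gst ρ z) = w := by rw [← ew, Ginv_Gst hμ hw]
    have e2 : Ginv ν (Gst ρ z) = v := by rw [← ev, Ginv_Gst hν hv]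
    rw [e1, e2]
    exact ⟨h1, hw, hv, ew, ev, e⟩
  exact ⟨fun z hz => (key z hz).1, fun z hz => (key z hz).2.1, fun z hz => (key z hz).2.2.1,
    fun z hz => (key z hz).2.2.2.1, fun z hz => (key z hz).2.2.2.2.1,
    fun z hz => (key z hz).2.2.2.2.2⟩

lemma exists_Gst_eq_of_mem_Dhat (hμ : HasCompactSupp μ) {g : ℝ} (hg : 0 < g)
    (h : -g ∈ Dhat μ) : ∃ w < aInf μ, Gst μ w = g := by
  have h1 : (g : EReal) < GaSup μ := by
    have := h.1
    rw [EReal.neg_lt_comm, EReal.coe_neg, neg_neg] at this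
    exact this
  obtain ⟨_, ⟨z, hz, rfl⟩, h2⟩ := lt_sSup_iff.1 h1
  obtain ⟨w, hwz, e⟩ := exists_Gst_eq hμ hg hz (EReal.coe_lt_coe_iff.1 h2).le
  exact ⟨w, hwz.trans_lt hz, e⟩

lemma exists_solvable (hμ : HasCompactSupp μ) (hν : HasCompactSupp ν) (h : IsFreeAdd μ ν ρ) :
    ∃ z₁, ∀ z ≤ z₁, Solvable μ ν ρ z := by
  obtain ⟨_, hρ, ε, hε, h⟩ := h
  refine ⟨aInf ρ - 2 * ε⁻¹, fun z hz => ?_⟩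
  have hε' : 0 < ε⁻¹ := inv_pos.2 hε
  have hzρ : z < aInf ρ := by linarith
  have hg := Gst_pos hρ hzρ
  have hgε : Gst ρ z < ε := by
    refine (Gst_le hρ hzρ).trans_lt ?_
    rw [inv_lt_comm₀ (by linarith) hε]
    linarith
  obtain ⟨_, h2, h3, h4⟩ := h (-Gst ρ z) ⟨by linarith, by linarith⟩ (by linarith)
  obtain ⟨w, hw, ew⟩ := exists_Gst_eq_of_mem_Dhat hμ hg h2
  obtain ⟨v, hv, ev⟩ := exists_Gst_eq_of_mem_Dhat hν hg h3
  refine ⟨hzρ, w, v, hw, hv, ew, ev, ?_⟩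
  simp only [Rhat, neg_neg] at h4
  rw [Ginv_Gst hρ hzρ, ← ew, Ginv_Gst hμ hw, ew, ← ev, Ginv_Gst hν hv, ev, inv_neg] at h4
  linarith

/-- The subordination equations propagate past `z₀` as long as `z₀ < a_ρ`: the distance estimate
keeps `w` and `v` away from the supports of `μ` and `ν`, so that the local inverses of `G_μ` and
`G_ν` extend beyond `G_ρ(z₀)`, and the identity theorem applies. -/
lemma solvable_extend (hμ : HasCompactSupp μ) (hν : HasCompactSupp ν) (hρ : HasCompactSupp ρ)
    {z₀ : ℝ} (hz₀ : z₀ < aInf ρ) (h : ∀ z < z₀, Solvable μ ν ρ z) :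
    ∃ z₁ > z₀, ∀ z < z₁, Solvable μ ν ρ z := by
  have room : ∀ (τ : Measure ℝ) [IsProbabilityMeasure τ] (hτ : HasCompactSupp τ) (w : ℝ → ℝ),
      (∀ z < z₀, w z < aInf τ) → (∀ z < z₀, Gst τ (w z) = Gst ρ z) →
      (∀ z < z₀, aInf ρ - z ≤ aInf τ - w z) →
      ∃ c < aInf τ, Gst ρ z₀ < Gst τ c := by
    intro τ _ hτ w h1 h2 h3
    set d := aInf ρ - z₀ with hd
    have hd0 : 0 < d := by rw [hd]; linarith
    have h4 : Gst ρ z₀ ≤ Gst τ (aInf τ - d) := by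
      have hc : Tendsto (Gst ρ) (𝓝[<] z₀) (𝓝 (Gst ρ z₀)) :=
        (hasDerivAt_Gst hρ hz₀).continuousAt.tendsto.mono_left nhdsWithin_le_nhds
      refine le_of_tendsto hc ?_
      filter_upwards [self_mem_nhdsWithin] with z hz
      have hz' : z < z₀ := hz
      rw [← h2 z hz']
      refine (strictMonoOn_Gst hτ).monotoneOn (h1 z hz') (sub_lt_self _ hd0) ?_
      linarith [h3 z hz']
    refine ⟨aInf τ - d / 2, by linarith, h4.trans_lt ?_⟩
    exact strictMonoOn_Gst hτ (sub_lt_self _ hd0) (sub_lt_self _ (half_pos hd0)) (by linarith)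
  have hS : Subord μ ν ρ (Iio z₀) _ _ := Subord.of_solvable hμ hν h
  obtain ⟨c, hc, hgc⟩ := room μ hμ _ hS.w_lt hS.w_eq
    fun z hz => hS.dist_le hμ hν hρ isOpen_Iio hz
  obtain ⟨c', hc', hgc'⟩ := room ν hν _ hS.v_lt hS.v_eq
    fun z hz => hS.symm.dist_le hν hμ hρ isOpen_Iio hz
  have hcont := (hasDerivAt_Gst hρ hz₀).continuousAt
  have hev : ∀ᶠ z in 𝓝 z₀, z < aInf ρ ∧ Gst ρ z < Gst μ c ∧ Gst ρ z < Gst ν c' :=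
    (eventually_lt_nhds hz₀).and
      ((hcont.eventually_lt_const hgc).and (hcont.eventually_lt_const hgc'))
  obtain ⟨z₁, hz₁, hev₁⟩ : ∃ z₁ > z₀, z₁ < aInf ρ ∧ Gst ρ z₁ < Gst μ c ∧ Gst ρ z₁ < Gst ν c' := by
    have := (hev.filter_mono nhdsWithin_le_nhds).and (self_mem_nhdsWithin (s := Ioi z₀))
    obtain ⟨z₁, h1, h2⟩ := this.exists
    exact ⟨z₁, h2, h1⟩
  obtain ⟨h1, h2, h3⟩ := hev₁
  refine ⟨z₁, hz₁, ?_⟩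
  have hleft : ∀ z < z₁, z < aInf ρ := fun z hz => hz.trans h1
  have hlt : ∀ z < z₁, Gst ρ z ≤ Gst ρ z₁ := fun z hz =>
    (strictMonoOn_Gst hρ).monotoneOn (hleft z hz) h1 hz.le
  have sol : ∀ (τ : Measure ℝ) [IsProbabilityMeasure τ] (hτ : HasCompactSupp τ) (c : ℝ),
      c < aInf τ → Gst ρ z₁ < Gst τ c → ∀ z < z₁, ∃ w < aInf τ, Gst τ w = Gst ρ z := by
    intro τ _ hτ c hc hg z hz
    obtain ⟨w, hw, e⟩ := exists_Gst_eq hτ (Gst_pos hρ (hleft z hz)) hc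
      ((hlt z hz).trans hg.le)
    exact ⟨w, hw.trans_lt hc, e⟩
  have an : ∀ (τ : Measure ℝ) [IsProbabilityMeasure τ] (hτ : HasCompactSupp τ),
      (∀ z < z₁, ∃ w < aInf τ, Gst τ w = Gst ρ z) →
      AnalyticOnNhd ℝ (fun z => Ginv τ (Gst ρ z)) (Iio z₁) := by
    intro τ _ hτ hs z hz
    obtain ⟨w, hw, e⟩ := hs z hz
    have hG := analyticAt_Ginv hτ hw
    rw [e] at hG
    exact hG.comp (analyticAt_Gst hρ (hleft z hz))
  have sμ := sol μ hμ c hc h2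
  have sν := sol ν hν c' hc' h3
  have hL : AnalyticOnNhd ℝ (fun z => Ginv μ (Gst ρ z) + Ginv ν (Gst ρ z)) (Iio z₁) :=
    (an μ hμ sμ).add (an ν hν sν)
  have hR : AnalyticOnNhd ℝ (fun z => z - (Gst ρ z)⁻¹) (Iio z₁) := fun z hz =>
    analyticAt_id.sub ((analyticAt_Gst hρ (hleft z hz)).inv (Gst_pos hρ (hleft z hz)).ne')
  have heq : EqOn (fun z => Ginv μ (Gst ρ z) + Ginv ν (Gst ρ z)) (fun z => z - (Gst ρ z)⁻¹)
      (Iio z₁) := by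
    refine hL.eqOn_of_preconnected_of_eventuallyEq hR isPreconnected_Iio
      (z₀ := z₀ - 1) (show z₀ - 1 < z₁ by linarith) ?_
    filter_upwards [Iio_mem_nhds (show z₀ - 1 < z₀ by linarith)] with z hz
    exact hS.add_eq z hz
  intro z hz
  obtain ⟨w, hw, ew⟩ := sμ z hz
  obtain ⟨v, hv, ev⟩ := sν z hz
  refine ⟨hleft z hz, w, v, hw, hv, ew, ev, ?_⟩
  have e := heq hz
  simp only at e
  rw [← e]
  nth_rewrite 1 [← ew]
  rw [← ev, Ginv_Gst hμ hw, Ginv_Gst hν hv]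

lemma solvable (hμ : HasCompactSupp μ) (hν : HasCompactSupp ν) (h : IsFreeAdd μ ν ρ) :
    ∀ z < aInf ρ, Solvable μ ν ρ z := by
  have hρ := h.2.1
  by_contra! hcon
  obtain ⟨b, hb, hnb⟩ := hcon
  obtain ⟨z₁, hz₁⟩ := exists_solvable hμ hν h
  set S : Set ℝ := {z | ∀ y < z, Solvable μ ν ρ y} with hS
  have hbdd : ∀ z ∈ S, z ≤ b := fun z hz => not_lt.1 fun hlt => hnb (hz b hlt)
  have hne : S.Nonempty := ⟨z₁, fun y hy => hz₁ y hy.le⟩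
  have hmem : ∀ z < sSup S, Solvable μ ν ρ z := by
    intro z hz
    obtain ⟨y, hy, hzy⟩ := exists_lt_of_lt_csSup hne hz
    exact hy z hzy
  obtain ⟨z₂, hz₂, h2⟩ := solvable_extend hμ hν hρ ((csSup_le hne hbdd).trans_lt hb) hmem
  exact absurd (le_csSup ⟨b, hbdd⟩ (show z₂ ∈ S from h2)) (not_le.2 hz₂)

end subordination

/-! ### The logarithmic potential as an integral of the `R`-transform -/

section potential

variable {μ : Measure ℝ} [IsProbabilityMeasure μ]

/-- The logarithmic potential to the left of the support. -/
noncomputable def Lpot (μ : Measure ℝ) (w : ℝ) : ℝ := ∫ l, Real.log (l - w) ∂μ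

lemma Upot_eq_Lpot (hc : HasCompactSupp μ) {z : ℝ} (hz : z < aInf μ) : Upot μ z = Lpot μ z := by
  refine integral_congr_ae ?_
  filter_upwards [ae_bounds hc] with l hl
  rw [abs_of_neg (by linarith [hl.1]), neg_sub]

lemma aestronglyMeasurable_log (w : ℝ) : AEStronglyMeasurable (fun l => Real.log (l - w)) μ :=
  (Real.measurable_log.comp (measurable_id.sub_const w)).aestronglyMeasurable

lemma integrable_log (hc : HasCompactSupp μ) {w : ℝ} (hw : w < aInf μ) :
    Integrable (fun l => Real.log (l - w)) μ := by
  refine Integrable.of_bound (aestronglyMeasurable_log w)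
    (max |Real.log (aInf μ - w)| |Real.log (bSup μ - w)|) ?_
  filter_upwards [ae_bounds hc] with l hl
  exact abs_le_max_abs_abs (Real.log_le_log (by linarith) (by linarith [hl.1]))
    (Real.log_le_log (by linarith [hl.1]) (by linarith [hl.2]))

lemma log_le_Lpot (hc : HasCompactSupp μ) {w : ℝ} (hw : w < aInf μ) :
    Real.log (aInf μ - w) ≤ Lpot μ w := by
  have : ∫ _, Real.log (aInf μ - w) ∂μ ≤ Lpot μ w := by
    refine integral_mono_ae (integrable_const _) (integrable_log hc hw) ?_
    filter_upwards [ae_bounds hc] with l hl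
    exact Real.log_le_log (by linarith) (by linarith [hl.1])
  simpa using this

lemma Lpot_le_log (hc : HasCompactSupp μ) {w : ℝ} (hw : w < aInf μ) :
    Lpot μ w ≤ Real.log (bSup μ - w) := by
  have : Lpot μ w ≤ ∫ _, Real.log (bSup μ - w) ∂μ := by
    refine integral_mono_ae (integrable_log hc hw) (integrable_const _) ?_
    filter_upwards [ae_bounds hc] with l hl
    exact Real.log_le_log (by linarith [hl.1]) (by linarith [hl.2])
  simpa using this

lemma hasDerivAt_Lpot (hc : HasCompactSupp μ) {w : ℝ} (hw : w < aInf μ) :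
    HasDerivAt (Lpot μ) (-Gst μ w) w := by
  obtain ⟨c, hwc, hca⟩ := exists_between hw
  have key := hasDerivAt_integral_of_dominated_loc_of_deriv_le (μ := μ)
    (F := fun z l => Real.log (l - z)) (F' := fun z l => -(l - z)⁻¹)
    (bound := fun _ => (aInf μ - c)⁻¹) (x₀ := w) (s := Iio c)
    (Iio_mem_nhds hwc) (Eventually.of_forall fun x => aestronglyMeasurable_log x) (integrable_log hc hw)
    (by fun_prop) ?_ (integrable_const _) ?_
  · have h2 := key.2
    rw [integral_neg] at h2
    exact h2
  · filter_upwards [ae_bounds hc] with l hl x hx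
    have hx' : x < c := hx
    have h0 : 0 < aInf μ - c := by linarith
    have h1 : 0 < l - x := by linarith [hl.1]
    rw [norm_neg, Real.norm_of_nonneg (by positivity)]
    gcongr
    exact hl.1
  · filter_upwards [ae_bounds hc] with l hl x hx
    have hx' : x < c := hx
    have h1 : l - x ≠ 0 := by linarith [hl.1]
    have h3 : HasDerivAt (fun x : ℝ => l - x) (-1) x := by
      simpa using (hasDerivAt_id x).const_sub l
    refine (h3.log h1).congr_deriv ?_
    rw [neg_div, one_div]

/-- The potential `U_μ + log G_μ`, expressed in the variable `s = G_μ`. -/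
noncomputable def Vpot (μ : Measure ℝ) (s : ℝ) : ℝ := Lpot μ (Ginv μ s) + Real.log s

lemma hasDerivAt_Rhat (hc : HasCompactSupp μ) {y : ℝ} (hy : y < aInf μ) :
    HasDerivAt (Rhat μ) ((Gst μ y ^ 2)⁻¹ - (mom μ 1 y)⁻¹) (-Gst μ y) := by
  have hG := Gst_pos hc hy
  have h1 : HasDerivAt (Ginv μ) (mom μ 1 y)⁻¹ (-(-Gst μ y)) := by
    rw [neg_neg]; exact hasDerivAt_Ginv hc hy
  have h2 := (h1.comp (-Gst μ y) (hasDerivAt_neg _)).sub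
    (hasDerivAt_inv (neg_ne_zero.2 hG.ne'))
  refine h2.congr_deriv ?_
  rw [neg_sq]
  ring

lemma hasDerivAt_Vpot (hc : HasCompactSupp μ) {y : ℝ} (hy : y < aInf μ) :
    HasDerivAt (Vpot μ) (Gst μ y * deriv (Rhat μ) (-Gst μ y)) (Gst μ y) := by
  have hG := Gst_pos hc hy
  have h1 : HasDerivAt (Lpot μ) (-Gst μ y) (Ginv μ (Gst μ y)) := by
    rw [Ginv_Gst hc hy]; exact hasDerivAt_Lpot hc hy
  refine ((h1.comp _ (hasDerivAt_Ginv hc hy)).add (Real.hasDerivAt_log hG.ne')).congr_deriv ?_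
  rw [(hasDerivAt_Rhat hc hy).deriv]
  field_simp
  ring

/-- As `s ↓ 0`, the point `y` with `G_μ(y) = s` tends to `-∞`, where
`U_μ(y) = log |y| + o(1) = -log G_μ(y) + o(1)`. -/
lemma tendsto_Vpot (hc : HasCompactSupp μ) {w : ℝ} (hw : w < aInf μ) :
    Tendsto (Vpot μ) (𝓝[>] 0) (𝓝 0) := by
  set r := bSup μ - aInf μ with hr
  have hlo : Tendsto (fun s : ℝ => Real.log (1 - s * r)) (𝓝[>] 0) (𝓝 0) := by
    have : ContinuousAt (fun s : ℝ => Real.log (1 - s * r)) 0 :=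
      ContinuousAt.log (by fun_prop) (by simp)
    simpa using this.tendsto.mono_left (nhdsWithin_le_nhds (s := Ioi 0))
  have hhi : Tendsto (fun s : ℝ => Real.log (1 + s * r)) (𝓝[>] 0) (𝓝 0) := by
    have : ContinuousAt (fun s : ℝ => Real.log (1 + s * r)) 0 :=
      ContinuousAt.log (by fun_prop) (by simp)
    simpa using this.tendsto.mono_left (nhdsWithin_le_nhds (s := Ioi 0))
  have hsmall : ∀ᶠ s : ℝ in 𝓝[>] 0, 0 < s ∧ s < Gst μ w ∧ s * r < 1 := by
    have h1 : ∀ᶠ s : ℝ in 𝓝 0, s * r < 1 :=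
      (by fun_prop : ContinuousAt (fun s : ℝ => s * r) 0).eventually_lt_const (by simp)
    exact (eventually_mem_nhdsWithin).and (nhdsWithin_le_nhds
      ((eventually_lt_nhds (Gst_pos hc hw)).and h1))
  have main : ∀ s : ℝ, 0 < s ∧ s < Gst μ w ∧ s * r < 1 →
      Real.log (1 - s * r) ≤ Vpot μ s ∧ Vpot μ s ≤ Real.log (1 + s * r) := by
    rintro s ⟨hs, hsw, hsr⟩
    obtain ⟨y, hyw, rfl⟩ := exists_Gst_eq hc hs hw hsw.le
    have hy : y < aInf μ := hyw.trans_lt hw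
    have hab := aInf_le_bSup hc
    have h1 := Gst_le hc hy
    have h2 := le_Gst hc hy
    have ha : 0 < aInf μ - y := by linarith
    have hb : 0 < bSup μ - y := by linarith
    rw [inv_le_iff_one_le_mul₀ hb] at h2
    rw [le_inv_comm₀ hs ha, ← one_div, le_div_iff₀ hs] at h1
    rw [Vpot, Ginv_Gst hc hy]
    constructor
    · calc Real.log (1 - Gst μ y * r) ≤ Real.log ((aInf μ - y) * Gst μ y) :=
            Real.log_le_log (by linarith) (by rw [hr]; linarith)
        _ = Real.log (aInf μ - y) + Real.log (Gst μ y) := Real.log_mul ha.ne' hs.ne'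
        _ ≤ _ := by linarith [log_le_Lpot hc hy]
    · calc Lpot μ y + Real.log (Gst μ y) ≤ Real.log (bSup μ - y) + Real.log (Gst μ y) := by
            linarith [Lpot_le_log hc hy]
        _ = Real.log ((bSup μ - y) * Gst μ y) := (Real.log_mul hb.ne' hs.ne').symm
        _ ≤ _ := Real.log_le_log (by positivity) (by rw [hr]; linarith)
  exact tendsto_of_tendsto_of_tendsto_of_le_of_le' hlo hhi
    (hsmall.mono fun s hs => (main s hs).1) (hsmall.mono fun s hs => (main s hs).2)

/-- `∫₀^g s R̂_μ'(-s) ds = U_μ(w) + log g` for `g = G_μ(w)`. Integrability at `0` holds because the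
integrand is nonnegative and has a primitive with a limit. -/
lemma integral_Rhat (hc : HasCompactSupp μ) {w : ℝ} (hw : w < aInf μ) :
    IntervalIntegrable (fun s => s * deriv (Rhat μ) (-s)) volume 0 (Gst μ w) ∧
    ∫ s in (0 : ℝ)..Gst μ w, s * deriv (Rhat μ) (-s) = Lpot μ w + Real.log (Gst μ w) := by
  have hg := Gst_pos hc hw
  set F := Function.update (Vpot μ) 0 0 with hF
  have hFd : ∀ s ∈ Ioc 0 (Gst μ w), HasDerivAt F (s * deriv (Rhat μ) (-s)) s := by
    intro s hs
    obtain ⟨y, hyw, rfl⟩ := exists_Gst_eq hc hs.1 hw hs.2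
    refine (hasDerivAt_Vpot hc (hyw.trans_lt hw)).congr_of_eventuallyEq ?_
    filter_upwards [lt_mem_nhds hs.1] with t ht
    exact Function.update_of_ne ht.ne' _ _
  have hcont : ContinuousOn F (Icc 0 (Gst μ w)) := by
    intro s hs
    rcases hs.1.eq_or_lt with rfl | h0
    · rw [hF, continuousWithinAt_update_same]
      refine (tendsto_Vpot hc hw).mono_left (nhdsWithin_mono _ ?_)
      rintro t ⟨ht, ht0⟩
      exact lt_of_le_of_ne ht.1 (Ne.symm ht0)
    · exact (hFd s ⟨h0, hs.2⟩).continuousAt.continuousWithinAt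
  have hnn : ∀ s ∈ Ioo 0 (Gst μ w), 0 ≤ s * deriv (Rhat μ) (-s) := by
    intro s hs
    obtain ⟨y, hyw, rfl⟩ := exists_Gst_eq hc hs.1 hw hs.2.le
    have hy := hyw.trans_lt hw
    rw [(hasDerivAt_Rhat hc hy).deriv]
    refine mul_nonneg hs.1.le (sub_nonneg.2 ?_)
    exact inv_anti₀ (pow_pos hs.1 2) (Gst_sq_le hc hy)
  have hint : IntervalIntegrable (fun s => s * deriv (Rhat μ) (-s)) volume 0 (Gst μ w) := by
    rw [intervalIntegrable_iff_integrableOn_Ioc_of_le hg.le]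
    exact intervalIntegral.integrableOn_deriv_of_nonneg hcont
      (fun s hs => hFd s ⟨hs.1, hs.2.le⟩) hnn
  refine ⟨hint, ?_⟩
  rw [intervalIntegral.integral_eq_sub_of_hasDerivAt_of_le hg.le hcont
    (fun s hs => hFd s ⟨hs.1, hs.2.le⟩) hint, hF, Function.update_self,
    Function.update_of_ne hg.ne', Vpot, Ginv_Gst hc hw, sub_zero]

end potential

/-- On all of `(-G_ρ(a_ρ), 0)`, and not only near `0`, the `R`-transforms add up. -/
lemma deriv_Rhat_add {μ ν ρ : Measure ℝ} [IsProbabilityMeasure μ] [IsProbabilityMeasure ν]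
    [IsProbabilityMeasure ρ] (hμ : HasCompactSupp μ) (hν : HasCompactSupp ν)
    (hρ : HasCompactSupp ρ) (hS : ∀ z < aInf ρ, Solvable μ ν ρ z) {y : ℝ} (hy : y < aInf ρ) :
    deriv (Rhat ρ) (-Gst ρ y) = deriv (Rhat μ) (-Gst ρ y) + deriv (Rhat ν) (-Gst ρ y) := by
  have heq : Rhat ρ =ᶠ[𝓝 (-Gst ρ y)] Rhat μ + Rhat ν := by
    obtain ⟨y', hyy', hy'⟩ := exists_between hy
    have h1 : -Gst ρ y' < -Gst ρ y := neg_lt_neg (strictMonoOn_Gst hρ hy hy' hyy')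
    have h2 : -Gst ρ y < 0 := neg_lt_zero.2 (Gst_pos hρ hy)
    filter_upwards [Ioo_mem_nhds h1 h2] with u hu
    obtain ⟨x, hx, ex⟩ := exists_Gst_eq hρ (neg_pos.2 hu.2) hy' (neg_le.1 hu.1.le)
    obtain ⟨hxρ, w, v, hw, hv, ew, ev, e⟩ := hS x (hx.trans_lt hy')
    have e1 := Ginv_Gst hρ hxρ
    have e2 := Ginv_Gst hμ hw
    have e3 := Ginv_Gst hν hv
    rw [ew, ex] at e2
    rw [ev, ex] at e3
    rw [ex] at e1 e
    simp only [Pi.add_apply, Rhat]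
    rw [e1, e2, e3]
    rw [inv_neg] at e
    linarith
  obtain ⟨_, w, v, hw, hv, ew, ev, _⟩ := hS y hy
  have d1 := (hasDerivAt_Rhat hμ hw).differentiableAt
  have d2 := (hasDerivAt_Rhat hν hv).differentiableAt
  rw [ew] at d1
  rw [ev] at d2
  rw [heq.deriv_eq, deriv_add d1 d2]

end FreeAdd

/-- for `z < z*_ρ`, `U_ρ(z) = E_{μ,ν,z}(G_ρ(z))`. -/
theorem statement8 (μ ν ρ : MeasureTheory.Measure ℝ)
    [MeasureTheory.IsProbabilityMeasure μ] [MeasureTheory.IsProbabilityMeasure ν]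
    (hcμ : HasCompactSupp μ) (hcν : HasCompactSupp ν) (hnd : Nondeg μ)
    (hρ : IsFreeAdd μ ν ρ) :
    ∀ z : ℝ, z < aInf ρ → Upot ρ z = Efun μ ν z (Gst ρ z) := by
  intro z hz
  have := hρ.1
  have hcρ := hρ.2.1
  have hS := FreeAdd.solvable hcμ hcν hρ
  obtain ⟨_, w, v, hw, hv, ew, ev, e⟩ := hS z hz
  obtain ⟨-, Iρ⟩ := FreeAdd.integral_Rhat hcρ hz
  obtain ⟨iμ, Iμ⟩ := FreeAdd.integral_Rhat hcμ hw
  obtain ⟨iν, Iν⟩ := FreeAdd.integral_Rhat hcν hv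
  rw [ew] at iμ Iμ
  rw [ev] at iν Iν
  have hg := FreeAdd.Gst_pos hcρ hz
  have hadd : ∫ s in (0 : ℝ)..Gst ρ z, s * deriv (Rhat ρ) (-s)
      = (∫ s in (0 : ℝ)..Gst ρ z, s * deriv (Rhat μ) (-s))
        + ∫ s in (0 : ℝ)..Gst ρ z, s * deriv (Rhat ν) (-s) := by
    rw [← intervalIntegral.integral_add iμ iν]
    refine intervalIntegral.integral_congr_ae (Eventually.of_forall fun s hs => ?_)
    rw [uIoc_of_le hg.le] at hs
    obtain ⟨y, hyz, rfl⟩ := FreeAdd.exists_Gst_eq hcρ hs.1 hz hs.2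
    rw [FreeAdd.deriv_Rhat_add hcμ hcν hcρ hS (hyz.trans_lt hz), mul_add]
  have hR : ∀ l : ℝ, l - z + Rhat μ (-Gst ρ z) = l - v := by
    intro l
    have e2 := FreeAdd.Ginv_Gst hcμ hw
    rw [ew] at e2
    rw [Rhat, neg_neg, e2, inv_neg]
    linarith
  have hE : ∫ l, Real.log (l - z + Rhat μ (-Gst ρ z)) ∂ν = FreeAdd.Lpot ν v := by
    simp_rw [hR]
    rfl
  rw [FreeAdd.Upot_eq_Lpot hcρ hz, Efun, hE]
  linarith
end
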